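/- There exist universal constants c > 0 and n₀ such that for all n ≥ n₀, r ≥ 2, and k with n·r ≤ k ≤ n²: if a randomized t-round adaptive algorithm making k exact linear measurements per round is such that for every symmetric n×n real matrix A it outputs a matrix B of rank at most r satisfying ‖A − B‖ ≤ 2·σ_{r+1}(A) with probability at least 99/100 (over the seed), then t ≥ c·log(n²/k)/log log n. -/

import Mathlib

/-!
Let `A = α (u vᵀ + v uᵀ) + G + Gᵀ`, where `u, v` are uniformly random sign vectors, `G` has
independent standard Gaussian entries and `α = 720 / √n`. With probability `1 - e^{-n}` the noise
`G + Gᵀ` has operator norm at most `60 √n` (`goodSet_form`, by a net argument), and the plant has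
rank at most two, so `σ_{r+1}(A) ≤ 60 √n` for `r ≥ 2` and a successful output `B` is within
`180 √n` of the plant in operator norm (`close_of_success`), whereas the plant itself has
operator norm at least `720 √n`. Only a fraction `4 e^{-n/32}` of all plants is that close to any
fixed `B` (`count_close`), so success requires information about the plant.

Measurements of `A` are linear measurements of the Gaussian vector `G` shifted by `x = α u ⊗ v`.
Let `P` be the orthogonal projection onto the span of all the queries made so far. The likelihood
ratio of the history under the shift depends on `x` only through `P x`
(`AdaptSys.shift_state`). Hence, while the captured energy `|P x|²` is at most `B`, events about
the history are at most `e^ℓ` times likelier under the shift than without it, up to an error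
`e^{B - ℓ}` (`AdaptSys.shift_bound`). Without the shift the queries are independent of the plant,
and the energy they capture has exponential tails (`sum_exp_proj_tens_le`,
`AdaptSys.sum_energy_le`). Comparing the two models in every round shows that the captured energy
grows at most by a constant factor `R` per round, from `O(D)` with `D = t k / n + 5`
(`AdaptSys.capture_le`). After `t` rounds the planted history is therefore at most
`e^{3 D R^t + D}` times likelier than the unplanted one. Averaging over plants, noise and seed
(`master`) gives `(99/100)(1 - e^{-n}) ≤ (2t+1) e^{-D} + 4 e^{3 D R^t + D - n/32}`, which fails
when `R^t` is below a small power of `n² / k` (`numerics`). This yields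
`t ≥ c log (n² / k)`, and in particular the bound with the factor `log log n`.
-/

open MeasureTheory ProbabilityTheory Matrix
open scoped ENNReal Classical

noncomputable section

/-- Squared Euclidean norm of a finitely-indexed real vector. -/
def sqNorm {ι : Type*} [Fintype ι] (x : ι → ℝ) : ℝ := ∑ i, x i ^ 2

/-- Squared Frobenius norm of a real matrix. -/
def frobSq {m n : Type*} [Fintype m] [Fintype n] (A : Matrix m n ℝ) : ℝ :=
  ∑ i, ∑ j, A i j ^ 2

/-- Spectral (ℓ₂ operator) norm of a real matrix. -/
def specNorm {m n : Type*} [Fintype m] [Fintype n] (A : Matrix m n ℝ) : ℝ :=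
  sSup ((fun x : n → ℝ => Real.sqrt (sqNorm (A.mulVec x))) '' {x | sqNorm x ≤ 1})

/-- `i`-th largest singular value (1-based), characterized via
`σ_i(A) = min {‖A − X‖ : rank X ≤ i − 1}`. -/
def singVal {m n : Type*} [Fintype m] [Fintype n] (A : Matrix m n ℝ) (i : ℕ) : ℝ :=
  sInf {c | ∃ X : Matrix m n ℝ, X.rank ≤ i - 1 ∧ c = specNorm (A - X)}

/-- Flattening of an `n × n` matrix into a vector in `ℝ^{n²}`. -/
def vec (n : ℕ) (A : Matrix (Fin n) (Fin n) ℝ) : Fin (n * n) → ℝ :=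
  fun i => A (finProdFinEquiv.symm i).1 (finProdFinEquiv.symm i).2

/-- `u ⊗ v = vec (u vᵀ) ∈ ℝ^{n²}`. -/
def tensor {n : ℕ} (u v : Fin n → ℝ) : Fin (n * n) → ℝ :=
  vec n (Matrix.of fun i j => u i * v j)

/-- Standard Gaussian measure on `ι → ℝ`. -/
def stdGaussian (ι : Type*) [Fintype ι] : Measure (ι → ℝ) :=
  Measure.pi fun _ => gaussianReal 0 1

/-- Standard Gaussian measure on `n × n` matrices (as `Fin n → Fin n → ℝ`). -/
def stdGaussianMat (n : ℕ) : Measure (Fin n → Fin n → ℝ) :=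
  Measure.pi fun _ => stdGaussian (Fin n)

/-- Query maps of a deterministic `t`-round adaptive algorithm making `k` linear
measurements per round on inputs in `ℝ^N`. -/
def QueryMaps (N k t : ℕ) : Type :=
  (j : Fin t) → (Fin (j : ℕ) → (Fin k → ℝ)) → Matrix (Fin k) (Fin N) ℝ

namespace QueryMaps

variable {N k t : ℕ}

/-- Restriction of a round-`j` history to the first `i` rounds. -/
def prefixHist {j : Fin t} (h : Fin (j : ℕ) → Fin k → ℝ) {i : Fin t}
    (hij : (i : ℕ) < (j : ℕ)) : Fin (i : ℕ) → Fin k → ℝ :=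
  fun l => h ⟨l.1, l.isLt.trans hij⟩

/-- Validity of query maps: measurability, orthonormal rows within each round, and
orthogonality across rounds along consistent histories. -/
def Valid (Q : QueryMaps N k t) : Prop :=
  (∀ (j : Fin t) (i : Fin k) (l : Fin N), Measurable fun h => Q j h i l) ∧
  (∀ (j : Fin t) (h : Fin (j : ℕ) → Fin k → ℝ), Q j h * (Q j h)ᵀ = 1) ∧
  (∀ (j i : Fin t) (hij : (i : ℕ) < (j : ℕ)) (h : Fin (j : ℕ) → Fin k → ℝ),
      Q j h * (Q i (prefixHist h hij))ᵀ = 0)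

/-- Responses of the algorithm under exact linear measurements of `a`. -/
def resp (Q : QueryMaps N k t) (a : Fin N → ℝ) (j : Fin t) : Fin k → ℝ :=
  (Q j fun i => resp Q a ⟨i.1, i.isLt.trans j.isLt⟩).mulVec a
termination_by (j : ℕ)
decreasing_by exact i.isLt

/-- Responses of the algorithm under noisy linear measurements of `a`, with fresh
per-round noise `g`. -/
def nresp (Q : QueryMaps N k t) (a : Fin N → ℝ) (g : Fin t → Fin k → ℝ) (j : Fin t) :
    Fin k → ℝ :=
  ((Q j fun i => nresp Q a g ⟨i.1, i.isLt.trans j.isLt⟩).mulVec a) + g j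
termination_by (j : ℕ)
decreasing_by exact i.isLt

/-- The `tk × N` matrix stacking all the query matrices realized along the run of the
algorithm on input `a` (exact measurements). -/
def runMat (Q : QueryMaps N k t) (a : Fin N → ℝ) : Matrix (Fin t × Fin k) (Fin N) ℝ :=
  Matrix.of fun p l =>
    Q p.1 (fun i => resp Q a ⟨i.1, i.isLt.trans p.1.isLt⟩) p.2 l

end QueryMaps

/-- Kullback–Leibler divergence, valued in `[0, ∞]`, defined with the natural
logarithm. -/
def klDiv {Ω : Type*} [MeasurableSpace Ω] (P Q : Measure Ω) : ℝ≥0∞ :=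
  if P ≪ Q ∧ Integrable (fun x => Real.log ((P.rnDeriv Q x).toReal)) P then
    ENNReal.ofReal (∫ x, Real.log ((P.rnDeriv Q x).toReal) ∂P)
  else ⊤


/-- The rank-`r` plant `Σ_{i=1}^r uᵢ vᵢᵀ` built from the rows of `U` and `V`. -/
def plant {n r : ℕ} (U V : Fin r → Fin n → ℝ) : Matrix (Fin n) (Fin n) ℝ :=
  Matrix.of fun i j => ∑ l, U l i * V l j

/-- Schatten-`p` norm (real `p`), via the singular values. -/
def schattenNorm {n : ℕ} (p : ℝ) (A : Matrix (Fin n) (Fin n) ℝ) : ℝ :=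
  (∑ i ∈ Finset.range n, singVal A (i + 1) ^ p) ^ (1 / p)

/-- Ky-Fan `p` norm: sum of the `p` largest singular values. -/
def kyFanNorm {n : ℕ} (p : ℕ) (A : Matrix (Fin n) (Fin n) ℝ) : ℝ :=
  ∑ i ∈ Finset.range p, singVal A (i + 1)

/-! ### Gaussian vectors: shifts and resampling -/

section

/-- Standard Gaussian measure on `ι → ℝ`. -/
abbrev gaussPi (ι : Type*) [Fintype ι] : Measure (ι → ℝ) :=
  Measure.pi fun _ => gaussianReal 0 1

lemma lintegral_prod_pi {ι : Type*} [Fintype ι] (μ : ι → Measure ℝ)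
    [∀ i, IsProbabilityMeasure (μ i)] (f : ι → ℝ → ℝ≥0∞) (hf : ∀ i, Measurable (f i)) :
    ∫⁻ g, ∏ i, f i (g i) ∂(Measure.pi μ) = ∏ i, ∫⁻ x, f i x ∂(μ i) := by
  rw [lintegral_prod_eq_prod_lintegral_of_indepFun Finset.univ (fun i (g : ι → ℝ) => f i (g i))
    (iIndepFun_pi (X := f) fun i => (hf i).aemeasurable)
    (fun i => (hf i).comp (measurable_pi_apply i))]
  refine Finset.prod_congr rfl fun i _ => ?_
  exact (measurePreserving_eval μ i).lintegral_comp (hf i)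

lemma gaussianReal_shift (y : ℝ) :
    gaussianReal y 1 = (gaussianReal 0 1).withDensity
      (fun x => ENNReal.ofReal (Real.exp (y * x - y * y / 2))) := by
  rw [gaussianReal_of_var_ne_zero _ one_ne_zero, gaussianReal_of_var_ne_zero _ one_ne_zero,
    ← withDensity_mul _ (measurable_gaussianPDF _ _) (by fun_prop)]
  congr 1
  ext x
  simp only [gaussianPDF, Pi.mul_apply]
  rw [← ENNReal.ofReal_mul (gaussianPDFReal_nonneg _ _ _)]
  congr 1
  simp only [gaussianPDFReal, mul_assoc, ← Real.exp_add]
  congr 3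
  simp
  ring

/-- Cameron–Martin formula: the density of a shifted standard Gaussian vector. -/
lemma cameron_martin {ι : Type*} [Fintype ι] (y : ι → ℝ) (F : (ι → ℝ) → ℝ≥0∞)
    (hF : Measurable F) :
    ∫⁻ g, F (y + g) ∂(gaussPi ι) =
      ∫⁻ g, F g * ENNReal.ofReal (Real.exp (y ⬝ᵥ g - y ⬝ᵥ y / 2)) ∂(gaussPi ι) := by
  have h1 : (gaussPi ι).map (fun g => y + g) = Measure.pi (fun i => gaussianReal (y i) 1) := by
    have := Measure.pi_map_pi (μ := fun _ : ι => gaussianReal 0 1)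
      (f := fun i x => y i + x) (fun i => by fun_prop)
    have h2 : ∀ i, (gaussianReal 0 1).map (fun x => y i + x) = gaussianReal (y i) 1 := by
      intro i; rw [gaussianReal_map_const_add]; simp
    simp only [h2] at this
    exact this
  have h3 : Measure.pi (fun i => gaussianReal (y i) 1) = (gaussPi ι).withDensity
      (fun g => ENNReal.ofReal (Real.exp (y ⬝ᵥ g - y ⬝ᵥ y / 2))) := by
    apply Measure.pi_eq
    intro s hs
    rw [withDensity_apply _ (MeasurableSet.univ_pi hs), ← lintegral_indicator (MeasurableSet.univ_pi hs)]
    have : ∀ g : ι → ℝ, (Set.univ.pi s).indicator (fun g : ι → ℝ =>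
        ENNReal.ofReal (Real.exp (y ⬝ᵥ g - y ⬝ᵥ y / 2))) g =
        ∏ i, (s i).indicator (fun x => ENNReal.ofReal (Real.exp (y i * x - y i * y i / 2))) (g i) := by
      intro g
      by_cases hg : g ∈ Set.univ.pi s
      · have hg' : ∀ i, g i ∈ s i := fun i => hg i trivial
        rw [Set.indicator_of_mem hg]
        simp only [Set.indicator_of_mem (hg' _)]
        rw [← ENNReal.ofReal_prod_of_nonneg (fun i _ => (Real.exp_pos _).le), ← Real.exp_sum]
        simp [dotProduct, Finset.sum_sub_distrib, Finset.sum_div]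
      · rw [Set.indicator_of_notMem hg]
        simp only [Set.mem_pi, Set.mem_univ, true_implies, not_forall] at hg
        obtain ⟨i, hi⟩ := hg
        exact (Finset.prod_eq_zero (Finset.mem_univ i) (Set.indicator_of_notMem hi _)).symm
    simp_rw [this]
    rw [lintegral_prod_pi _ _ (fun i => Measurable.indicator (by fun_prop) (hs i))]
    refine Finset.prod_congr rfl fun i _ => ?_
    rw [lintegral_indicator (hs i), gaussianReal_shift (y i), withDensity_apply _ (hs i)]
  have hm : Measurable fun g : ι → ℝ => ENNReal.ofReal (Real.exp (y ⬝ᵥ g - y ⬝ᵥ y / 2)) := by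
    unfold dotProduct; fun_prop
  calc ∫⁻ g, F (y + g) ∂(gaussPi ι) = ∫⁻ g, F g ∂((gaussPi ι).map (fun g => y + g)) := by
        rw [lintegral_map hF (by fun_prop)]
    _ = _ := by
        rw [h1, h3, lintegral_withDensity_eq_lintegral_mul _ hm hF]
        simp [mul_comm]

lemma lintegral_exp_dot {ι : Type*} [Fintype ι] (y : ι → ℝ) :
    ∫⁻ g, ENNReal.ofReal (Real.exp (y ⬝ᵥ g)) ∂(gaussPi ι)
      = ENNReal.ofReal (Real.exp (y ⬝ᵥ y / 2)) := by
  have h := cameron_martin y (fun _ => ENNReal.ofReal (Real.exp (y ⬝ᵥ y / 2))) measurable_const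
  simp only [lintegral_const, measure_univ, mul_one] at h
  rw [h]
  refine lintegral_congr fun g => ?_
  rw [← ENNReal.ofReal_mul (Real.exp_pos _).le, ← Real.exp_add]
  congr 2; ring

lemma charFunDual_gaussPi {ι : Type*} [Fintype ι] (L : StrongDual ℝ (ι → ℝ)) :
    charFunDual (gaussPi ι) L =
      Complex.exp (-((∑ i, (L (Pi.single i 1)) ^ 2 : ℝ) : ℂ) / 2) := by
  rw [charFunDual_pi]
  have : ∀ i, charFunDual (gaussianReal 0 1) (L.comp (.single ℝ (fun _ : ι => ℝ) i)) =
      Complex.exp (-((L (Pi.single i 1)) ^ 2 : ℝ) / 2) := by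
    intro i
    have h1 : ∀ x : ℝ, (L.comp (.single ℝ (fun _ : ι => ℝ) i)) x = L (Pi.single i 1) * x := by
      intro x
      have : (Pi.single i x : ι → ℝ) = x • Pi.single i 1 := by
        rw [← Pi.single_smul]; simp
      simp [this, mul_comm]
    rw [charFunDual_apply]
    simp_rw [h1]
    have h2 := charFun_apply_real (μ := gaussianReal 0 1) (L (Pi.single i 1))
    rw [charFun_gaussianReal] at h2
    push_cast at h2 ⊢
    rw [← h2]
    congr 1
    simp
    ring
  simp_rw [this]
  rw [← Complex.exp_sum]
  congr 1
  push_cast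
  rw [← Finset.sum_div, Finset.sum_neg_distrib]

/-- Resampling a Gaussian vector on the kernel of an orthogonal projection preserves its law. -/
lemma resample {ι : Type*} [Fintype ι] (P : Matrix ι ι ℝ) (hs : Pᵀ = P) (hP : P * P = P)
    (F : (ι → ℝ) → ℝ≥0∞) (hF : Measurable F) :
    ∫⁻ g, F g ∂(gaussPi ι) =
      ∫⁻ g, ∫⁻ g', F (P *ᵥ g + (g' - P *ᵥ g')) ∂(gaussPi ι) ∂(gaussPi ι) := by
  have hmv : ∀ M : Matrix ι ι ℝ, Measurable fun g : ι → ℝ => M *ᵥ g := fun M =>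
    (Continuous.matrix_mulVec continuous_const continuous_id).measurable
  have hm : Measurable fun p : (ι → ℝ) × (ι → ℝ) => P *ᵥ p.1 + (p.2 - P *ᵥ p.2) :=
    ((hmv P).comp measurable_fst).add (measurable_snd.sub ((hmv P).comp measurable_snd))
  have key : ((gaussPi ι).prod (gaussPi ι)).map
      (fun p : (ι → ℝ) × (ι → ℝ) => P *ᵥ p.1 + (p.2 - P *ᵥ p.2)) = gaussPi ι := by
    have : IsProbabilityMeasure (((gaussPi ι).prod (gaussPi ι)).map
      (fun p : (ι → ℝ) × (ι → ℝ) => P *ᵥ p.1 + (p.2 - P *ᵥ p.2))) :=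
      Measure.isProbabilityMeasure_map hm.aemeasurable
    apply Measure.ext_of_charFunDual
    ext L
    set A : (ι → ℝ) →L[ℝ] (ι → ℝ) := LinearMap.toContinuousLinearMap P.mulVecLin with hA
    have hAv : ∀ v, A v = P *ᵥ v := fun v => by simp [hA]
    obtain ⟨D, hD⟩ : ∃ D : StrongDual ℝ (ι → ℝ), ∀ v, D v = L v - L (A v) :=
      ⟨L - L.comp A, fun v => rfl⟩
    set l : ι → ℝ := fun i => L (Pi.single i 1) with hl
    have hL : ∀ v, L v = l ⬝ᵥ v := by
      intro v
      conv_lhs => rw [← Finset.univ_sum_single v]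
      rw [map_sum]
      refine Finset.sum_congr rfl fun i _ => ?_
      have : (Pi.single i (v i) : ι → ℝ) = v i • Pi.single i 1 := by
        rw [← Pi.single_smul]; simp
      rw [this, map_smul, hl, smul_eq_mul, mul_comm]
    have hLA : ∀ i, L (A (Pi.single i 1)) = (P *ᵥ l) i := by
      intro i
      rw [hAv, hL, dotProduct_mulVec, ← mulVec_transpose, hs]
      simp
    rw [charFunDual_apply, integral_map hm.aemeasurable (by fun_prop)]
    have : ∀ p : (ι → ℝ) × (ι → ℝ), Complex.exp (↑(L (P *ᵥ p.1 + (p.2 - P *ᵥ p.2))) * Complex.I) =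
        Complex.exp (↑((L.comp A) p.1) * Complex.I) *
        Complex.exp (↑(D p.2) * Complex.I) := by
      intro p
      rw [← Complex.exp_add]
      congr 1
      simp [hAv, hD]
      ring
    simp_rw [this]
    rw [integral_prod_mul (μ := gaussPi ι) (ν := gaussPi ι)
      (fun g => Complex.exp (↑((L.comp A) g) * Complex.I))
      (fun g => Complex.exp (↑(D g) * Complex.I)),
      ← charFunDual_apply, ← charFunDual_apply, charFunDual_gaussPi, charFunDual_gaussPi,
      charFunDual_gaussPi, ← Complex.exp_add]
    congr 1
    have hsum : ∑ i, (L (Pi.single i 1)) ^ 2 = ∑ i, ((L.comp A) (Pi.single i 1)) ^ 2 +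
        ∑ i, (D (Pi.single i 1)) ^ 2 := by
      simp only [ContinuousLinearMap.comp_apply, hD, hLA]
      have e1 : (P *ᵥ l) ⬝ᵥ (P *ᵥ l) = l ⬝ᵥ (P *ᵥ l) := by
        rw [dotProduct_mulVec, ← mulVec_transpose, hs, mulVec_mulVec, hP, dotProduct_comm]
      simp only [dotProduct] at e1
      have : ∀ i, L (Pi.single i 1) = l i := fun i => rfl
      simp only [this, sub_sq, Finset.sum_add_distrib, Finset.sum_sub_distrib]
      have e2 : ∑ i, (P *ᵥ l) i ^ 2 = ∑ i, l i * (P *ᵥ l) i := by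
        rw [← e1]; exact Finset.sum_congr rfl fun i _ => by ring
      have e3 : ∑ i, 2 * l i * (P *ᵥ l) i = 2 * ∑ i, l i * (P *ᵥ l) i := by
        rw [Finset.mul_sum]; exact Finset.sum_congr rfl fun i _ => by ring
      rw [e2, e3]; ring
    rw [hsum]
    push_cast
    ring
  conv_lhs => rw [← key]
  rw [lintegral_map hF hm]
  exact lintegral_prod (fun p : (ι → ℝ) × (ι → ℝ) => F (P *ᵥ p.1 + (p.2 - P *ᵥ p.2)))
    (hF.comp hm).aemeasurable

end

/-! ### Random signs: exponential moments -/

section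

/-- The `±1` vector encoded by a Boolean vector. -/
def signVec {κ : Type*} (s : κ → Bool) : κ → ℝ := fun i => if s i then 1 else -1

lemma signVec_sq {κ : Type*} (s : κ → Bool) (i : κ) : signVec s i * signVec s i = 1 := by
  unfold signVec; split_ifs <;> norm_num

lemma signVec_dot {κ : Type*} [Fintype κ] (s : κ → Bool) :
    signVec s ⬝ᵥ signVec s = Fintype.card κ := by
  simp [dotProduct, signVec_sq]

/-- Sub-Gaussian bound for sums of independent signs. -/
lemma sum_exp_signVec_le {κ : Type*} [Fintype κ] [DecidableEq κ] (y : κ → ℝ) :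
    ∑ s : κ → Bool, Real.exp (y ⬝ᵥ signVec s) ≤
      2 ^ Fintype.card κ * Real.exp (y ⬝ᵥ y / 2) := by
  have h1 : ∑ s : κ → Bool, Real.exp (y ⬝ᵥ signVec s) = ∏ i, (2 * Real.cosh (y i)) := by
    have := Finset.prod_univ_sum (fun _ : κ => (Finset.univ : Finset Bool))
      (fun i b => Real.exp (y i * (if b then 1 else -1)))
    simp only [Fintype.piFinset_univ] at this
    calc _ = ∑ s : κ → Bool, ∏ i, Real.exp (y i * (if s i then 1 else -1)) := by
          refine Finset.sum_congr rfl fun s _ => ?_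
          rw [← Real.exp_sum]; rfl
      _ = _ := by
          rw [← this]
          refine Finset.prod_congr rfl fun i _ => ?_
          rw [Real.cosh_eq]
          simp
          ring
  rw [h1, Finset.prod_mul_distrib]
  simp only [Finset.prod_const, Finset.card_univ]
  gcongr
  calc ∏ i, Real.cosh (y i) ≤ ∏ i, Real.exp (y i ^ 2 / 2) :=
        Finset.prod_le_prod (fun i _ => (Real.cosh_pos _).le)
          (fun i _ => Real.cosh_le_exp_half_sq _)
    _ = _ := by
        rw [← Real.exp_sum]; simp [dotProduct, Finset.sum_div, sq]

lemma lintegral_exp_sq_le (a : ℝ) (h0 : 0 ≤ a) (h1 : a ≤ 1 / 4) :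
    ∫⁻ x, ENNReal.ofReal (Real.exp (a * x ^ 2)) ∂(gaussianReal 0 1)
      ≤ ENNReal.ofReal (Real.exp (2 * a)) := by
  have hb : 0 < 1 / 2 - a := by linarith
  rw [gaussianReal_of_var_ne_zero _ one_ne_zero,
    lintegral_withDensity_eq_lintegral_mul _ (measurable_gaussianPDF _ _) (by fun_prop)]
  have : ∀ x, (gaussianPDF 0 1 * fun x => ENNReal.ofReal (Real.exp (a * x ^ 2))) x =
      ENNReal.ofReal ((√(2 * Real.pi))⁻¹ * Real.exp (-(1 / 2 - a) * x ^ 2)) := by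
    intro x
    simp only [gaussianPDF, Pi.mul_apply]
    rw [← ENNReal.ofReal_mul (gaussianPDFReal_nonneg _ _ _)]
    congr 1
    simp only [gaussianPDFReal, mul_assoc, ← Real.exp_add]
    simp
    ring_nf
    simp
  simp_rw [this]
  rw [← ofReal_integral_eq_lintegral_ofReal ((integrable_exp_neg_mul_sq hb).const_mul _)
    (Filter.Eventually.of_forall fun x => by positivity)]
  apply ENNReal.ofReal_le_ofReal
  rw [integral_const_mul, integral_gaussian, ← Real.sqrt_inv, ← Real.sqrt_mul (by positivity)]
  apply Real.sqrt_le_iff.2 ⟨(Real.exp_pos _).le, ?_⟩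
  have e1 : (2 * Real.pi)⁻¹ * (Real.pi / (1 / 2 - a)) = 1 / (1 - 2 * a) := by
    have : (1 - 2 * a) ≠ 0 := by linarith
    have h2 : (1/2 - a) ≠ 0 := hb.ne'
    field_simp
  rw [e1, div_le_iff₀ (by linarith), ← Real.exp_nat_mul]
  have := Real.add_one_le_exp (4 * a)
  have e2 : ((2 : ℕ) : ℝ) * (2 * a) = 4 * a := by push_cast; ring
  rw [e2]
  nlinarith

lemma exists_diag {κ : Type*} [Fintype κ] [DecidableEq κ] (S : Matrix κ κ ℝ) (hS : S.PosSemidef) :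
    ∃ (d : κ → ℝ) (U : Matrix κ κ ℝ), Uᵀ * U = 1 ∧ (∀ i, 0 ≤ d i) ∧
      S = U * diagonal d * Uᵀ := by
  refine ⟨hS.1.eigenvalues, (hS.1.eigenvectorUnitary : Matrix κ κ ℝ), ?_, hS.eigenvalues_nonneg, ?_⟩
  · have := Unitary.coe_star_mul_self hS.1.eigenvectorUnitary
    simpa [star_eq_conjTranspose] using this
  · have := hS.1.spectral_theorem
    rw [Unitary.conjStarAlgAut_apply] at this
    simpa [star_eq_conjTranspose, Function.comp_def] using this

/-- Exponential moment of a positive semidefinite quadratic form at a random sign vector.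
After diagonalisation the square is linearised by an auxiliary Gaussian vector, the signs are
summed out, and the remaining Gaussian integral factorises over the eigenvalues. -/
lemma sum_exp_quad_le {κ : Type*} [Fintype κ] [DecidableEq κ] (S : Matrix κ κ ℝ) (hS : S.PosSemidef)
    (c θ : ℝ) (hc : ∀ x : κ → ℝ, x ⬝ᵥ (S *ᵥ x) ≤ c * (x ⬝ᵥ x)) (hθ : 0 ≤ θ)
    (hθc : θ * c ≤ 1 / 4) :
    ∑ s : κ → Bool, Real.exp (θ * (signVec s ⬝ᵥ (S *ᵥ signVec s))) ≤
      2 ^ Fintype.card κ * Real.exp (2 * θ * S.trace) := by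
  obtain ⟨d, U, hU, hd, hSd⟩ := exists_diag S hS
  -- `M` is a square root factor: `S = Mᵀ M`
  set M : Matrix κ κ ℝ := diagonal (fun i => √(d i)) * Uᵀ with hM
  have hSM : S = Mᵀ * M := by
    rw [hM, transpose_mul, transpose_transpose, diagonal_transpose, hSd]
    simp only [Matrix.mul_assoc]
    rw [← Matrix.mul_assoc (diagonal _) (diagonal _), diagonal_mul_diagonal]
    simp [Real.mul_self_sqrt (hd _)]
  have hMM : M * Mᵀ = diagonal d := by
    rw [hM, transpose_mul, transpose_transpose, diagonal_transpose]
    simp only [Matrix.mul_assoc]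
    rw [← Matrix.mul_assoc Uᵀ, hU, Matrix.one_mul, diagonal_mul_diagonal]
    simp [Real.mul_self_sqrt (hd _)]
  have hdc : ∀ i, d i ≤ c := by
    intro i
    have h := hc (U *ᵥ Pi.single i 1)
    have e1 : (U *ᵥ Pi.single i 1) ⬝ᵥ (U *ᵥ Pi.single i 1) = 1 := by
      rw [dotProduct_mulVec, ← mulVec_transpose, mulVec_mulVec, hU]; simp
    have e2 : (U *ᵥ Pi.single i 1) ⬝ᵥ (S *ᵥ (U *ᵥ Pi.single i 1)) = d i := by
      rw [hSd, mulVec_mulVec, Matrix.mul_assoc, hU, Matrix.mul_one, dotProduct_comm,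
        dotProduct_mulVec, ← mulVec_transpose, mulVec_mulVec, ← Matrix.mul_assoc, hU,
        Matrix.one_mul]
      simp
    rw [e1, e2] at h
    linarith
  have htr : S.trace = ∑ i, d i := by
    rw [hSM, trace_mul_comm, hMM, trace_diagonal]
  have hq : ∀ u : κ → ℝ, u ⬝ᵥ (S *ᵥ u) = (M *ᵥ u) ⬝ᵥ (M *ᵥ u) := by
    intro u
    rw [hSM, ← mulVec_mulVec, dotProduct_mulVec, ← mulVec_transpose, transpose_transpose]
  have h2θ : √(2 * θ) * √(2 * θ) = 2 * θ := Real.mul_self_sqrt (by linarith)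
  have hE : ∀ s : κ → Bool, ENNReal.ofReal (Real.exp (θ * (signVec s ⬝ᵥ (S *ᵥ signVec s)))) =
      ∫⁻ w, ENNReal.ofReal (Real.exp ((√(2 * θ) • (Mᵀ *ᵥ w)) ⬝ᵥ signVec s)) ∂(gaussPi κ) := by
    intro s
    have := lintegral_exp_dot (√(2 * θ) • (M *ᵥ signVec s))
    have e : θ * (signVec s ⬝ᵥ (S *ᵥ signVec s)) =
        (√(2 * θ) • (M *ᵥ signVec s)) ⬝ᵥ (√(2 * θ) • (M *ᵥ signVec s)) / 2 := by
      rw [hq, smul_dotProduct, dotProduct_smul, smul_eq_mul, smul_eq_mul, ← mul_assoc, h2θ]; ring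
    rw [e, ← this]
    refine lintegral_congr fun w => ?_
    congr 2
    rw [smul_dotProduct, smul_dotProduct, mulVec_transpose, ← dotProduct_mulVec, dotProduct_comm]
  rw [← ENNReal.ofReal_le_ofReal_iff (by positivity), ENNReal.ofReal_sum_of_nonneg
    (fun s _ => (Real.exp_pos _).le)]
  simp_rw [hE]
  have hmeas : ∀ s : κ → Bool, Measurable fun w : κ → ℝ =>
      ENNReal.ofReal (Real.exp ((√(2 * θ) • (Mᵀ *ᵥ w)) ⬝ᵥ signVec s)) := by
    intro s
    have h1 : Measurable fun w : κ → ℝ => Mᵀ *ᵥ w :=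
      (Continuous.matrix_mulVec continuous_const continuous_id).measurable
    unfold dotProduct
    simp only [Pi.smul_apply, smul_eq_mul]
    have h2 : ∀ i, Measurable fun w : κ → ℝ => (Mᵀ *ᵥ w) i := fun i =>
      (measurable_pi_apply i).comp h1
    fun_prop
  rw [← lintegral_finsetSum _ (fun s _ => hmeas s)]
  calc ∫⁻ w, ∑ s : κ → Bool, ENNReal.ofReal
          (Real.exp ((√(2 * θ) • (Mᵀ *ᵥ w)) ⬝ᵥ signVec s)) ∂(gaussPi κ)
      ≤ ∫⁻ w, ENNReal.ofReal (2 ^ Fintype.card κ) *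
          ∏ i, ENNReal.ofReal (Real.exp (θ * d i * (w i) ^ 2)) ∂(gaussPi κ) := by
        refine lintegral_mono fun w => ?_
        rw [← ENNReal.ofReal_sum_of_nonneg (fun s _ => (Real.exp_pos _).le),
          ← ENNReal.ofReal_prod_of_nonneg (fun s _ => (Real.exp_pos _).le),
          ← ENNReal.ofReal_mul (by positivity)]
        apply ENNReal.ofReal_le_ofReal
        refine (sum_exp_signVec_le _).trans_eq ?_
        rw [← Real.exp_sum]
        congr 2
        rw [smul_dotProduct, dotProduct_smul, smul_eq_mul, smul_eq_mul, ← mul_assoc, h2θ,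
          dotProduct_mulVec, ← mulVec_transpose, transpose_transpose, mulVec_mulVec, hMM]
        simp only [dotProduct, mulVec_diagonal]
        rw [mul_div_right_comm, Finset.mul_sum]
        refine Finset.sum_congr rfl fun i _ => ?_
        ring
    _ ≤ ENNReal.ofReal (2 ^ Fintype.card κ) *
          ∏ i, ENNReal.ofReal (Real.exp (2 * (θ * d i))) := by
        rw [lintegral_const_mul _ (by fun_prop), lintegral_prod_pi _
          (fun i x => ENNReal.ofReal (Real.exp (θ * d i * x ^ 2))) (fun i => by fun_prop)]
        gcongr with i
        exact lintegral_exp_sq_le _ (mul_nonneg hθ (hd i))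
          ((mul_le_mul_of_nonneg_left (hdc i) hθ).trans hθc)
    _ = _ := by
        rw [← ENNReal.ofReal_prod_of_nonneg (fun s _ => (Real.exp_pos _).le), ← Real.exp_sum,
          ← ENNReal.ofReal_mul (by positivity), htr, Finset.mul_sum]
        simp only [mul_assoc]

end

/-! ### Energy of a random sign tensor in a subspace -/

section

/-- Orthogonal projections, as real matrices. -/
def IsProj {ι : Type*} [Fintype ι] (P : Matrix ι ι ℝ) : Prop := Pᵀ = P ∧ P * P = P

namespace IsProj
variable {ι : Type*} [Fintype ι] {P : Matrix ι ι ℝ}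

lemma dot_comm (h : IsProj P) (x y : ι → ℝ) : (P *ᵥ x) ⬝ᵥ y = x ⬝ᵥ (P *ᵥ y) := by
  rw [dotProduct_mulVec, ← mulVec_transpose, h.1]

lemma dot_self (h : IsProj P) (x : ι → ℝ) : (P *ᵥ x) ⬝ᵥ (P *ᵥ x) = x ⬝ᵥ (P *ᵥ x) := by
  rw [h.dot_comm, mulVec_mulVec, h.2]

lemma dot_nonneg (h : IsProj P) (x : ι → ℝ) : 0 ≤ x ⬝ᵥ (P *ᵥ x) := by
  rw [← h.dot_self]; exact Finset.sum_nonneg fun i _ => mul_self_nonneg _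

lemma pyth (h : IsProj P) (x : ι → ℝ) :
    (x - P *ᵥ x) ⬝ᵥ (x - P *ᵥ x) = x ⬝ᵥ x - x ⬝ᵥ (P *ᵥ x) := by
  rw [sub_dotProduct, dotProduct_sub, dotProduct_sub, h.dot_self, dotProduct_comm (P *ᵥ x) x]; ring

lemma dot_le (h : IsProj P) (x : ι → ℝ) : x ⬝ᵥ (P *ᵥ x) ≤ x ⬝ᵥ x := by
  have h1 := h.pyth x
  have : 0 ≤ (x - P *ᵥ x) ⬝ᵥ (x - P *ᵥ x) := Finset.sum_nonneg fun i _ => mul_self_nonneg _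
  linarith

lemma posSemidef (h : IsProj P) : P.PosSemidef := by
  have := Matrix.posSemidef_conjTranspose_mul_self P
  rwa [conjTranspose_eq_transpose_of_trivial, h.1, h.2] at this
end IsProj

/-- The tensor product `u ⊗ v`, indexed by pairs. -/
def tens {n : ℕ} (u v : Fin n → ℝ) : Fin n × Fin n → ℝ := fun p => u p.1 * v p.2

lemma tens_dot {n : ℕ} (u v u' v' : Fin n → ℝ) :
    tens u v ⬝ᵥ tens u' v' = (u ⬝ᵥ u') * (v ⬝ᵥ v') := by
  simp only [tens, dotProduct, Fintype.sum_prod_type, Finset.sum_mul_sum]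
  exact Finset.sum_congr rfl fun i _ => Finset.sum_congr rfl fun j _ => by ring

/-- A random `±1` rank-one tensor captures energy about `tr P` in the range of a projection `P`,
with exponential tails at scale `n`. -/
lemma sum_exp_proj_tens_le {n : ℕ} (P : Matrix (Fin n × Fin n) (Fin n × Fin n) ℝ) (hP : IsProj P)
    (θ : ℝ) (hθ : 0 ≤ θ) (hθn : 8 * θ * n ≤ 1) :
    ∑ s : (Fin n → Bool) × (Fin n → Bool), Real.exp (θ *
      (tens (signVec s.1) (signVec s.2) ⬝ᵥ (P *ᵥ tens (signVec s.1) (signVec s.2)))) ≤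
      4 ^ n * Real.exp (4 * θ * P.trace) := by
  have hn0 : 0 ≤ θ * n := by positivity
  set B : (Fin n → ℝ) → Matrix (Fin n × Fin n) (Fin n) ℝ := fun v =>
    Matrix.of fun p a => if p.1 = a then v p.2 else 0 with hB
  have hBu : ∀ u v, B v *ᵥ u = tens u v := by
    intro u v; ext p
    simp [hB, mulVec, dotProduct, tens, mul_comm]
  have hq : ∀ u v : Fin n → ℝ, u ⬝ᵥ (((B v)ᵀ * P * B v) *ᵥ u) = tens u v ⬝ᵥ (P *ᵥ tens u v) := by
    intro u v
    rw [← mulVec_mulVec, ← mulVec_mulVec, hBu, dotProduct_mulVec, ← mulVec_transpose,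
      transpose_transpose, hBu]
  have hpsd : ∀ v, ((B v)ᵀ * P * B v).PosSemidef := by
    intro v
    have := hP.posSemidef.conjTranspose_mul_mul_same (B v)
    rwa [conjTranspose_eq_transpose_of_trivial] at this
  set S : Matrix (Fin n) (Fin n) ℝ :=
    ∑ a : Fin n, P.submatrix (fun b => (a, b)) (fun b => (a, b)) with hS
  have hSpsd : S.PosSemidef := Matrix.posSemidef_sum _ fun a _ => hP.posSemidef.submatrix _
  have hsub : ∀ (a : Fin n) (v : Fin n → ℝ),
      v ⬝ᵥ (P.submatrix (fun b => (a, b)) (fun b => (a, b)) *ᵥ v) =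
      tens (Pi.single a 1) v ⬝ᵥ (P *ᵥ tens (Pi.single a 1) v) := by
    intro a v
    symm
    simp only [dotProduct, mulVec, tens, Fintype.sum_prod_type, submatrix_apply]
    rw [Finset.sum_eq_single a (by intro b _ hb; simp [Pi.single_eq_of_ne hb]) (by simp)]
    refine Finset.sum_congr rfl fun b _ => ?_
    rw [Finset.sum_eq_single a (by intro b _ hb; simp [Pi.single_eq_of_ne hb]) (by simp)]
    simp
  have hSv : ∀ v, v ⬝ᵥ (S *ᵥ v) =
      ∑ a, tens (Pi.single a 1) v ⬝ᵥ (P *ᵥ tens (Pi.single a 1) v) := by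
    intro v
    rw [hS, sum_mulVec, dotProduct_sum]
    exact Finset.sum_congr rfl fun a _ => hsub a v
  have htr : ∀ v, ((B v)ᵀ * P * B v).trace = v ⬝ᵥ (S *ᵥ v) := by
    intro v
    rw [hSv, trace]
    refine Finset.sum_congr rfl fun a _ => ?_
    rw [← hq]; simp
  have htS : S.trace = P.trace := by
    rw [hS, trace_sum]; simp [trace, Fintype.sum_prod_type]
  rw [Fintype.sum_prod_type_right]
  calc _ ≤ ∑ v : Fin n → Bool, 2 ^ n * Real.exp (2 * θ * (signVec v ⬝ᵥ (S *ᵥ signVec v))) := by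
        refine Finset.sum_le_sum fun v _ => ?_
        have := sum_exp_quad_le ((B (signVec v))ᵀ * P * B (signVec v)) (hpsd _) n θ
          (fun x => by
            rw [hq]; refine (hP.dot_le _).trans_eq ?_
            rw [tens_dot, signVec_dot]; simp [mul_comm]) hθ (by linarith)
        simp only [hq, htr, Fintype.card_fin] at this
        exact this
    _ ≤ _ := by
        rw [← Finset.mul_sum]
        have := sum_exp_quad_le S hSpsd n (2 * θ)
          (fun x => by
            rw [hSv]
            calc _ ≤ ∑ a : Fin n, x ⬝ᵥ x := Finset.sum_le_sum fun a _ => by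
                  refine (hP.dot_le _).trans_eq ?_
                  rw [tens_dot]; simp
              _ = _ := by simp) (by linarith) (by linarith)
        rw [htS, Fintype.card_fin] at this
        calc _ ≤ (2 : ℝ) ^ n * (2 ^ n * Real.exp (2 * (2 * θ) * P.trace)) := by gcongr
          _ = _ := by
            rw [← mul_assoc, ← mul_pow]; norm_num
            left; ring

end

/-! ### Adaptive measurements of a Gaussian vector -/

section

/-- Matrices carry the product `σ`-algebra of their entries. -/
instance matMeasurableSpace {m n : Type*} : MeasurableSpace (Matrix m n ℝ) :=
  inferInstanceAs (MeasurableSpace (m → n → ℝ))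

lemma measurable_mat_iff {α m n : Type*} [MeasurableSpace α] {f : α → Matrix m n ℝ} :
    Measurable f ↔ ∀ i j, Measurable fun a => f a i j := by
  constructor
  · intro h i j
    exact (measurable_pi_apply j).comp ((measurable_pi_apply i).comp h)
  · intro h
    exact measurable_pi_lambda _ fun i => measurable_pi_lambda _ fun j => h i j

lemma measurable_mulVec {α m n : Type*} [MeasurableSpace α] [Fintype n] {M : α → Matrix m n ℝ}
    {x : α → n → ℝ} (hM : Measurable M) (hx : Measurable x) :
    Measurable fun a => M a *ᵥ x a := by
  have h1 := measurable_mat_iff.1 hM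
  have h2 := fun j => (measurable_pi_apply j).comp hx
  refine measurable_pi_lambda _ fun i => ?_
  simp only [mulVec, dotProduct]
  exact Finset.measurable_sum _ fun j _ => (h1 i j).mul (h2 j)

lemma measurable_dot {α n : Type*} [MeasurableSpace α] [Fintype n]
    {x y : α → n → ℝ} (hx : Measurable x) (hy : Measurable y) :
    Measurable fun a => x a ⬝ᵥ y a := by
  have h1 := fun j => (measurable_pi_apply j).comp hx
  have h2 := fun j => (measurable_pi_apply j).comp hy
  simp only [dotProduct]
  exact Finset.measurable_sum _ fun j _ => (h1 j).mul (h2 j)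

variable {ι : Type*} [Fintype ι] {k : ℕ}

/-- One Gram–Schmidt step: enlarge the projection `P` by the direction of the component of `q`
orthogonal to its range (if that component vanishes, `0⁻¹ = 0` leaves `P` unchanged). -/
def gsStep (P : Matrix ι ι ℝ) (q : ι → ℝ) : Matrix ι ι ℝ :=
  P + ((q - P *ᵥ q) ⬝ᵥ (q - P *ᵥ q))⁻¹ • vecMulVec (q - P *ᵥ q) (q - P *ᵥ q)

lemma IsProj.mulVec_sub {P : Matrix ι ι ℝ} (h : IsProj P) (q : ι → ℝ) :
    P *ᵥ (q - P *ᵥ q) = 0 := by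
  rw [Matrix.mulVec_sub, mulVec_mulVec, h.2, sub_self]

lemma IsProj.vecMul_sub {P : Matrix ι ι ℝ} (h : IsProj P) (q : ι → ℝ) :
    (q - P *ᵥ q) ᵥ* P = 0 := by
  rw [← mulVec_transpose, h.1, h.mulVec_sub]

lemma gsStep_isProj {P : Matrix ι ι ℝ} (h : IsProj P) (q : ι → ℝ) : IsProj (gsStep P q) := by
  have h1 := h.mulVec_sub q
  have h2 := h.vecMul_sub q
  unfold gsStep
  set w := q - P *ᵥ q
  refine ⟨?_, ?_⟩
  · rw [transpose_add, transpose_smul, transpose_vecMulVec, h.1]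
  · rw [Matrix.add_mul, Matrix.mul_add, Matrix.mul_add, h.2, Matrix.mul_smul, Matrix.smul_mul,
      Matrix.mul_vecMulVec, h1, Matrix.vecMulVec_mul, h2, Matrix.smul_mul, Matrix.mul_smul,
      vecMulVec_mul_vecMulVec, vecMulVec_smul, smul_smul, smul_smul]
    rw [zero_vecMulVec, vecMulVec_zero]
    by_cases hw : w ⬝ᵥ w = 0
    · simp [hw]
    · simp [hw]

lemma gsStep_mul {P : Matrix ι ι ℝ} (h : IsProj P) (q : ι → ℝ) : gsStep P q * P = P := by
  unfold gsStep
  rw [Matrix.add_mul, h.2, Matrix.smul_mul, Matrix.vecMulVec_mul, h.vecMul_sub, vecMulVec_zero]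
  simp

lemma gsStep_mulVec {P : Matrix ι ι ℝ} (h : IsProj P) (q : ι → ℝ) : gsStep P q *ᵥ q = q := by
  have h1 : (q - P *ᵥ q) ⬝ᵥ q = (q - P *ᵥ q) ⬝ᵥ (q - P *ᵥ q) := by
    rw [dotProduct_sub (q - P *ᵥ q) q, dotProduct_mulVec, h.vecMul_sub]; simp
  unfold gsStep
  rw [add_mulVec, smul_mulVec, vecMulVec_mulVec, h1]
  by_cases hw : (q - P *ᵥ q) ⬝ᵥ (q - P *ᵥ q) = 0
  · have := dotProduct_self_eq_zero.1 hw
    rw [this]; simp; exact (sub_eq_zero.1 this).symm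
  · rw [op_smul_eq_smul, smul_smul, inv_mul_cancel₀ hw, one_smul, add_sub_cancel]

lemma gsStep_trace (P : Matrix ι ι ℝ) (q : ι → ℝ) : (gsStep P q).trace ≤ P.trace + 1 := by
  unfold gsStep
  rw [trace_add, trace_smul, trace_vecMulVec, smul_eq_mul]
  gcongr
  by_cases hw : (q - P *ᵥ q) ⬝ᵥ (q - P *ᵥ q) = 0
  · simp [hw]
  · rw [inv_mul_cancel₀ hw]

lemma gsStep_measurable {α : Type*} [MeasurableSpace α] {P : α → Matrix ι ι ℝ} {q : α → ι → ℝ}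
    (hP : Measurable P) (hq : Measurable q) : Measurable fun a => gsStep (P a) (q a) := by
  have hw : Measurable fun a => q a - P a *ᵥ q a := hq.sub (measurable_mulVec hP hq)
  have hww := measurable_dot hw hw
  have hwi := fun j => (measurable_pi_apply j).comp hw
  refine measurable_mat_iff.2 fun i j => ?_
  simp only [gsStep, Matrix.add_apply, Matrix.smul_apply, vecMulVec_apply, smul_eq_mul]
  exact (measurable_mat_iff.1 hP i j).add (hww.inv.mul ((hwi i).mul (hwi j)))

/-- Gram–Schmidt over the rows of `M` listed in `L`. -/
def gsList (M : Matrix (Fin k) ι ℝ) (L : List (Fin k)) (P : Matrix ι ι ℝ) : Matrix ι ι ℝ :=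
  L.foldl (fun P i => gsStep P (M i)) P

lemma gsList_spec (M : Matrix (Fin k) ι ℝ) (L : List (Fin k)) :
    ∀ P : Matrix ι ι ℝ, IsProj P → IsProj (gsList M L P) ∧ gsList M L P * P = P ∧
      (∀ i ∈ L, gsList M L P *ᵥ M i = M i) ∧ (gsList M L P).trace ≤ P.trace + L.length := by
  induction L with
  | nil => intro P hP; simp [gsList, hP, hP.2]
  | cons a L ih =>
    intro P hP
    obtain ⟨h1, h2, h3, h4⟩ := ih (gsStep P (M a)) (gsStep_isProj hP _)
    have e : gsList M (a :: L) P = gsList M L (gsStep P (M a)) := rfl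
    rw [e]
    refine ⟨h1, ?_, ?_, ?_⟩
    · have := congrArg (· * P) h2
      simpa only [Matrix.mul_assoc, gsStep_mul hP] using this
    · intro i hi
      rcases List.mem_cons.1 hi with rfl | hi
      · have := congrArg (· *ᵥ M i) h2
        simpa only [← mulVec_mulVec, gsStep_mulVec hP] using this
      · exact h3 i hi
    · have := gsStep_trace P (M a)
      push_cast [List.length_cons]
      linarith

lemma gsList_measurable {α : Type*} [MeasurableSpace α] {M : α → Matrix (Fin k) ι ℝ}
    (hM : Measurable M) (L : List (Fin k)) : ∀ {P : α → Matrix ι ι ℝ}, Measurable P →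
    Measurable fun a => gsList (M a) L (P a) := by
  induction L with
  | nil => intro P hP; exact hP
  | cons i L ih =>
    intro P hP
    exact ih (gsStep_measurable hP ((measurable_pi_apply i).comp hM))

/-- The projection onto the span of the range of `P` and the rows of `M`. -/
def gsExt (M : Matrix (Fin k) ι ℝ) (P : Matrix ι ι ℝ) : Matrix ι ι ℝ :=
  gsList M (List.finRange k) P

lemma gsExt_isProj (M : Matrix (Fin k) ι ℝ) {P : Matrix ι ι ℝ} (hP : IsProj P) :
    IsProj (gsExt M P) := (gsList_spec M _ P hP).1

lemma gsExt_mul (M : Matrix (Fin k) ι ℝ) {P : Matrix ι ι ℝ} (hP : IsProj P) :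
    gsExt M P * P = P := (gsList_spec M _ P hP).2.1

lemma mul_gsExt (M : Matrix (Fin k) ι ℝ) {P : Matrix ι ι ℝ} (hP : IsProj P) :
    P * gsExt M P = P := by
  have := congrArg transpose (gsExt_mul M hP)
  rwa [transpose_mul, hP.1, (gsExt_isProj M hP).1] at this

lemma mulVec_gsExt (M : Matrix (Fin k) ι ℝ) {P : Matrix ι ι ℝ} (hP : IsProj P) (v : ι → ℝ) :
    M *ᵥ (gsExt M P *ᵥ v) = M *ᵥ v := by
  ext i
  have h := (gsList_spec M (List.finRange k) P hP).2.2.1 i (List.mem_finRange i)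
  change M i ⬝ᵥ (gsExt M P *ᵥ v) = M i ⬝ᵥ v
  rw [← (gsExt_isProj M hP).dot_comm]
  exact congrArg (· ⬝ᵥ v) h

lemma gsExt_trace (M : Matrix (Fin k) ι ℝ) {P : Matrix ι ι ℝ} (hP : IsProj P) :
    (gsExt M P).trace ≤ P.trace + k := by
  have := (gsList_spec M (List.finRange k) P hP).2.2.2
  rwa [List.length_finRange] at this

/-- An adaptive measurement system: in round `m`, from the current history `h`, the rows of
`q m h` are measured on the hidden vector and the answers are appended by `up m h`. -/
structure AdaptSys (H : Type*) [MeasurableSpace H] (k : ℕ) (ι : Type*) where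
  q : ℕ → H → Matrix (Fin k) ι ℝ
  up : ℕ → H → (Fin k → ℝ) → H
  h0 : H
  hq : ∀ m, Measurable (q m)
  hup : ∀ m, Measurable fun p : H × (Fin k → ℝ) => up m p.1 p.2

namespace AdaptSys
variable {H : Type*} [MeasurableSpace H] (S : AdaptSys H k ι)

/-- One round: the history is updated, and the projection onto the span of everything queried
so far is enlarged. -/
def next (m : ℕ) (z : H × Matrix ι ι ℝ) (g : ι → ℝ) : H × Matrix ι ι ℝ :=
  (S.up m z.1 (S.q m z.1 *ᵥ g), gsExt (S.q m z.1) z.2)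

/-- The history, and the projection onto the span of the queries, after `m` rounds. -/
def state : ℕ → (ι → ℝ) → H × Matrix ι ι ℝ
  | 0, _ => (S.h0, 0)
  | m + 1, g => S.next m (state m g) g

lemma isProj (m : ℕ) (g : ι → ℝ) : IsProj (S.state m g).2 := by
  induction m with
  | zero => simp [state, IsProj]
  | succ m ih => exact gsExt_isProj _ ih

lemma trace_le (m : ℕ) (g : ι → ℝ) : (S.state m g).2.trace ≤ m * k := by
  induction m with
  | zero => simp [state]
  | succ m ih =>
    refine (gsExt_trace _ (S.isProj m g)).trans ?_
    push_cast; linarith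

lemma next_measurable (m : ℕ) :
    Measurable fun p : (H × Matrix ι ι ℝ) × (ι → ℝ) => S.next m p.1 p.2 := by
  have h1 : Measurable fun p : (H × Matrix ι ι ℝ) × (ι → ℝ) => S.q m p.1.1 :=
    (S.hq m).comp (measurable_fst.comp measurable_fst)
  refine Measurable.prodMk ?_ (gsList_measurable h1 _ (measurable_snd.comp measurable_fst))
  exact (S.hup m).comp (Measurable.prodMk (measurable_fst.comp measurable_fst)
    (measurable_mulVec h1 measurable_snd))

lemma state_measurable (m : ℕ) : Measurable (S.state m) := by
  induction m with
  | zero => exact measurable_const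
  | succ m ih => exact (S.next_measurable m).comp (ih.prodMk measurable_id)

/-- The part of the vector invisible to the queries made so far is still Gaussian: conditionally
on the state it may be resampled. -/
lemma resample_state (m : ℕ) : ∀ Ψ : (H × Matrix ι ι ℝ) × (ι → ℝ) → ℝ≥0∞, Measurable Ψ →
    ∫⁻ g, Ψ (S.state m g, g) ∂(gaussPi ι) =
    ∫⁻ g, ∫⁻ g', Ψ (S.state m g, (S.state m g).2 *ᵥ g + (g' - (S.state m g).2 *ᵥ g'))
      ∂(gaussPi ι) ∂(gaussPi ι) := by
  induction m with
  | zero =>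
    intro Ψ _
    simp [state, gaussPi]
  | succ m ih =>
    intro Ψ hΨ
    have hΨ1 : Measurable fun p : (H × Matrix ι ι ℝ) × (ι → ℝ) => Ψ (S.next m p.1 p.2, p.2) :=
      hΨ.comp ((S.next_measurable m).prodMk measurable_snd)
    have hΨ2 : Measurable fun p : ((H × Matrix ι ι ℝ) × (ι → ℝ)) × (ι → ℝ) =>
        Ψ (S.next m p.1.1 p.1.2, (S.next m p.1.1 p.1.2).2 *ᵥ p.1.2 +
          (p.2 - (S.next m p.1.1 p.1.2).2 *ᵥ p.2)) := by
      have hn : Measurable fun p : ((H × Matrix ι ι ℝ) × (ι → ℝ)) × (ι → ℝ) =>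
          S.next m p.1.1 p.1.2 := (S.next_measurable m).comp measurable_fst
      refine hΨ.comp (hn.prodMk ?_)
      have hn2 := measurable_snd.comp hn
      exact (measurable_mulVec hn2 (measurable_snd.comp measurable_fst)).add
        (measurable_snd.sub (measurable_mulVec hn2 measurable_snd))
    have e1 := ih _ hΨ1
    have e2 := ih _ (hΨ2.lintegral_prod_right' (ν := gaussPi ι))
    change ∫⁻ g, Ψ (S.next m (S.state m g) g, g) ∂(gaussPi ι) = _
    refine e1.trans (Eq.trans ?_ e2.symm)
    refine lintegral_congr fun g => ?_
    set z := S.state m g with hz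
    have hP : IsProj z.2 := S.isProj m g
    set P' := gsExt (S.q m z.1) z.2 with hP'
    have hPP : IsProj P' := gsExt_isProj _ hP
    have m1 : z.2 * P' = z.2 := mul_gsExt _ hP
    have m2 : P' * z.2 = z.2 := gsExt_mul _ hP
    have hm : Measurable fun g' : ι → ℝ => Ψ (S.next m z (z.2 *ᵥ g + (g' - z.2 *ᵥ g')),
        z.2 *ᵥ g + (g' - z.2 *ᵥ g')) := by
      refine hΨ1.comp (measurable_const.prodMk ?_)
      exact measurable_const.add (measurable_id.sub (measurable_mulVec measurable_const measurable_id))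
    rw [resample P' hPP.1 hPP.2 _ hm]
    refine lintegral_congr fun g' => lintegral_congr fun g'' => ?_
    have key : z.2 *ᵥ g + (P' *ᵥ g' + (g'' - P' *ᵥ g'') - z.2 *ᵥ (P' *ᵥ g' + (g'' - P' *ᵥ g''))) =
        P' *ᵥ (z.2 *ᵥ g + (g' - z.2 *ᵥ g')) + (g'' - P' *ᵥ g'') := by
      simp only [mulVec_add, Matrix.mulVec_sub, mulVec_mulVec, m1, m2]
      abel
    have hnext : S.next m z (P' *ᵥ (z.2 *ᵥ g + (g' - z.2 *ᵥ g')) + (g'' - P' *ᵥ g'')) =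
        S.next m z (z.2 *ᵥ g + (g' - z.2 *ᵥ g')) := by
      unfold next
      rw [mulVec_add (S.q m z.1) (P' *ᵥ _), Matrix.mulVec_sub (S.q m z.1) g'', hP', mulVec_gsExt _ hP,
        mulVec_gsExt _ hP, sub_self, add_zero]
    rw [key, hnext]
    rfl

/-- The likelihood ratio of the state under a shift by `y`: only the projection of `y` onto the
queried span matters. -/
lemma shift_state (m : ℕ) (y : ι → ℝ) (F : H × Matrix ι ι ℝ → ℝ≥0∞) (hF : Measurable F) :
    ∫⁻ g, F (S.state m (y + g)) ∂(gaussPi ι) =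
    ∫⁻ g, F (S.state m g) * ENNReal.ofReal (Real.exp (((S.state m g).2 *ᵥ y) ⬝ᵥ g -
      y ⬝ᵥ ((S.state m g).2 *ᵥ y) / 2)) ∂(gaussPi ι) := by
  have hm : Measurable fun p : (H × Matrix ι ι ℝ) × (ι → ℝ) =>
      F p.1 * ENNReal.ofReal (Real.exp (y ⬝ᵥ p.2 - y ⬝ᵥ y / 2)) := by
    have := measurable_dot (α := (H × Matrix ι ι ℝ) × (ι → ℝ)) (measurable_const (a := y))
      measurable_snd
    exact (hF.comp measurable_fst).mul (by fun_prop)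
  refine (cameron_martin y _ (hF.comp (S.state_measurable m))).trans ?_
  refine (S.resample_state m _ hm).trans (lintegral_congr fun g => ?_)
  have hP := S.isProj m g
  set P := (S.state m g).2
  simp only
  rw [lintegral_const_mul]
  swap
  · have : Measurable fun g' : ι → ℝ => y ⬝ᵥ (P *ᵥ g + (g' - P *ᵥ g')) :=
      measurable_dot measurable_const (measurable_const.add
        (measurable_id.sub (measurable_mulVec measurable_const measurable_id)))
    fun_prop
  congr 1
  have e : ∀ g' : ι → ℝ, ENNReal.ofReal (Real.exp (y ⬝ᵥ (P *ᵥ g + (g' - P *ᵥ g')) - y ⬝ᵥ y / 2)) =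
      ENNReal.ofReal (Real.exp (y ⬝ᵥ (P *ᵥ g) - y ⬝ᵥ y / 2)) *
      ENNReal.ofReal (Real.exp ((y - P *ᵥ y) ⬝ᵥ g')) := by
    intro g'
    rw [← ENNReal.ofReal_mul (Real.exp_pos _).le, ← Real.exp_add]
    congr 2
    rw [dotProduct_add, dotProduct_sub, sub_dotProduct, hP.dot_comm]
    ring
  simp_rw [e]
  have hm2 : Measurable fun g' : ι → ℝ => (y - P *ᵥ y) ⬝ᵥ g' :=
    measurable_dot measurable_const measurable_id
  rw [lintegral_const_mul _ (by fun_prop), lintegral_exp_dot,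
    ← ENNReal.ofReal_mul (Real.exp_pos _).le, ← Real.exp_add, hP.pyth, hP.dot_comm]
  congr 2
  ring

end AdaptSys

end

/-! ### Growth of the captured energy -/

section

instance gaussPi_isProb (ι : Type*) [Fintype ι] : IsProbabilityMeasure (gaussPi ι) := by
  unfold gaussPi; infer_instance

namespace AdaptSys
variable {ι : Type*} [Fintype ι] {k : ℕ} {H : Type*} [MeasurableSpace H] (S : AdaptSys H k ι)

lemma energy_measurable (x : ι → ℝ) :
    Measurable fun z : H × Matrix ι ι ℝ => x ⬝ᵥ (z.2 *ᵥ x) :=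
  measurable_dot measurable_const (measurable_mulVec measurable_snd measurable_const)

/-- As long as the queried span captures energy at most `B` of the shift `x`, events about the
state are at most `e^ℓ` times likelier under the shift, up to an error `e^{B-ℓ}`. -/
lemma shift_bound (m : ℕ) (x : ι → ℝ) (A : Set (H × Matrix ι ι ℝ)) (hA : MeasurableSet A)
    (B ℓ : ℝ) :
    gaussPi ι {g | S.state m (x + g) ∈ A ∧ x ⬝ᵥ ((S.state m (x + g)).2 *ᵥ x) ≤ B} ≤
      ENNReal.ofReal (Real.exp (B - ℓ)) +
      ENNReal.ofReal (Real.exp ℓ) * gaussPi ι {g | S.state m g ∈ A} := by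
  have hE : MeasurableSet {z : H × Matrix ι ι ℝ | x ⬝ᵥ (z.2 *ᵥ x) ≤ B} :=
    measurableSet_le (energy_measurable x) measurable_const
  have hs := S.state_measurable m
  have hshift : Measurable fun g : ι → ℝ => S.state m (x + g) := hs.comp (by fun_prop)
  set A' := A ∩ {z : H × Matrix ι ι ℝ | x ⬝ᵥ (z.2 *ᵥ x) ≤ B} with hA'
  have hA'm : MeasurableSet A' := hA.inter hE
  have e1 : gaussPi ι {g | S.state m (x + g) ∈ A ∧ x ⬝ᵥ ((S.state m (x + g)).2 *ᵥ x) ≤ B} =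
      ∫⁻ g, A'.indicator 1 (S.state m (x + g)) ∂(gaussPi ι) := by
    have := lintegral_indicator_one (μ := gaussPi ι) (hshift hA'm)
    rw [show {g | S.state m (x + g) ∈ A ∧ x ⬝ᵥ ((S.state m (x + g)).2 *ᵥ x) ≤ B} =
      (fun g => S.state m (x + g)) ⁻¹' A' from rfl, ← this]
    rfl
  have e2 : gaussPi ι {g | S.state m g ∈ A} = ∫⁻ g, A.indicator 1 (S.state m g) ∂(gaussPi ι) := by
    have := lintegral_indicator_one (μ := gaussPi ι) (hs hA)
    rw [show {g | S.state m g ∈ A} = S.state m ⁻¹' A from rfl, ← this]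
    rfl
  have e3 := S.shift_state m ((2 : ℝ) • x) (fun _ => 1) measurable_const
  simp only [lintegral_const, measure_univ, one_mul] at e3
  have hLm : Measurable fun g : ι → ℝ => ENNReal.ofReal (Real.exp (((S.state m g).2 *ᵥ ((2:ℝ) • x)) ⬝ᵥ g -
      ((2:ℝ) • x) ⬝ᵥ ((S.state m g).2 *ᵥ ((2:ℝ) • x)) / 2)) := by
    have h1 := measurable_dot (measurable_mulVec (measurable_snd.comp hs)
      (measurable_const (a := (2:ℝ) • x))) measurable_id
    have h2 := (energy_measurable (H := H) ((2:ℝ) • x)).comp hs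
    exact (Real.measurable_exp.comp (h1.sub (h2.div_const 2))).ennreal_ofReal
  rw [e1, e2, S.shift_state m x _ (measurable_one.indicator hA'm)]
  nth_rewrite 1 [← mul_one (ENNReal.ofReal (Real.exp (B - ℓ)))]
  rw [e3, ← lintegral_const_mul _ hLm, ← lintegral_const_mul _
    (show Measurable fun g => A.indicator (1 : H × Matrix ι ι ℝ → ℝ≥0∞) (S.state m g) from
      (measurable_one.indicator hA).comp hs), ← lintegral_add_left (hLm.const_mul _)]
  refine lintegral_mono fun g => ?_
  set z := S.state m g
  by_cases hz : z ∈ A'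
  · have hzA : z ∈ A := hz.1
    have hzB : x ⬝ᵥ (z.2 *ᵥ x) ≤ B := hz.2
    simp only [Set.indicator_of_mem hz, Set.indicator_of_mem hzA, Pi.one_apply, one_mul, mul_one]
    rw [← ENNReal.ofReal_mul (Real.exp_pos _).le, ← ENNReal.ofReal_add (by positivity) (by positivity)]
    apply ENNReal.ofReal_le_ofReal
    rw [← Real.exp_add]
    have q1 : (z.2 *ᵥ ((2:ℝ) • x)) ⬝ᵥ g = 2 * ((z.2 *ᵥ x) ⬝ᵥ g) := by
      rw [mulVec_smul, smul_dotProduct, smul_eq_mul]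
    have q2 : ((2:ℝ) • x) ⬝ᵥ (z.2 *ᵥ ((2:ℝ) • x)) = 4 * (x ⬝ᵥ (z.2 *ᵥ x)) := by
      rw [mulVec_smul, smul_dotProduct, dotProduct_smul, smul_eq_mul, smul_eq_mul]; ring
    rw [q1, q2]
    rcases le_total ((z.2 *ᵥ x) ⬝ᵥ g - x ⬝ᵥ (z.2 *ᵥ x) / 2) ℓ with h | h
    · have := Real.exp_le_exp.2 h
      have h0 := Real.exp_pos (B - ℓ + (2 * ((z.2 *ᵥ x) ⬝ᵥ g) - 4 * (x ⬝ᵥ (z.2 *ᵥ x)) / 2))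
      linarith
    · have h0 := Real.exp_pos ℓ
      refine le_trans (Real.exp_le_exp.2 ?_) (le_add_of_nonneg_right h0.le)
      linarith
  · simp [Set.indicator_of_notMem hz]

end AdaptSys

/-- The planted vector with signs `s` and scale `α`. -/
def plantVec (n : ℕ) (α : ℝ) (s : (Fin n → Bool) × (Fin n → Bool)) : Fin n × Fin n → ℝ :=
  α • tens (signVec s.1) (signVec s.2)

namespace AdaptSys
variable {n k : ℕ} {H : Type*} [MeasurableSpace H] (S : AdaptSys H k (Fin n × Fin n))

/-- Queries made without seeing the plant capture little of it. -/
lemma sum_energy_le (m : ℕ) (α θ B : ℝ) (hθ : 0 ≤ θ) (hθn : 8 * (θ * α ^ 2) * n ≤ 1) :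
    ∑ s, gaussPi (Fin n × Fin n) {g | B < plantVec n α s ⬝ᵥ ((S.state m g).2 *ᵥ plantVec n α s)} ≤
      ENNReal.ofReal (4 ^ n * Real.exp (4 * (θ * α ^ 2) * (m * k) - θ * B)) := by
  have hm : ∀ s, MeasurableSet {g | B < plantVec n α s ⬝ᵥ ((S.state m g).2 *ᵥ plantVec n α s)} :=
    fun s => measurableSet_lt measurable_const
      ((energy_measurable (H := H) (plantVec n α s)).comp (S.state_measurable m))
  simp_rw [← fun s => lintegral_indicator_one (μ := gaussPi (Fin n × Fin n)) (hm s)]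
  rw [← lintegral_finsetSum _ (fun s _ => measurable_one.indicator (hm s))]
  refine (lintegral_mono (g := fun _ => ENNReal.ofReal
    (4 ^ n * Real.exp (4 * (θ * α ^ 2) * (m * k) - θ * B))) fun g => ?_).trans (by simp)
  set P := (S.state m g).2 with hP
  have hPp : IsProj P := S.isProj m g
  have hq : ∀ s, plantVec n α s ⬝ᵥ (P *ᵥ plantVec n α s) = α ^ 2 *
      (tens (signVec s.1) (signVec s.2) ⬝ᵥ (P *ᵥ tens (signVec s.1) (signVec s.2))) := by
    intro s
    rw [plantVec, mulVec_smul, smul_dotProduct, dotProduct_smul, smul_eq_mul, smul_eq_mul]; ring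
  calc _ ≤ ∑ s : (Fin n → Bool) × (Fin n → Bool), ENNReal.ofReal (Real.exp (θ * α ^ 2 *
        (tens (signVec s.1) (signVec s.2) ⬝ᵥ (P *ᵥ tens (signVec s.1) (signVec s.2))) - θ * B)) := by
        refine Finset.sum_le_sum fun s _ => ?_
        by_cases h : B < plantVec n α s ⬝ᵥ (P *ᵥ plantVec n α s)
        · rw [Set.indicator_of_mem (by exact h), Pi.one_apply, ← ENNReal.ofReal_one]
          apply ENNReal.ofReal_le_ofReal
          apply Real.one_le_exp
          rw [hq] at h
          have := mul_le_mul_of_nonneg_left h.le hθ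
          linarith
        · rw [Set.indicator_of_notMem (by exact h)]; exact zero_le
    _ ≤ _ := by
        rw [← ENNReal.ofReal_sum_of_nonneg (fun s _ => (Real.exp_pos _).le)]
        apply ENNReal.ofReal_le_ofReal
        simp_rw [Real.exp_sub, ← Finset.sum_div]
        rw [mul_div_assoc']
        gcongr
        refine (sum_exp_proj_tens_le P hPp (θ * α ^ 2) (by positivity) hθn).trans ?_
        gcongr
        exact S.trace_le m g

/-- Total probability that, in the planted model, the first `m` rounds capture energy more
than `B` of the plant. -/
def capture (α : ℝ) (m : ℕ) (B : ℝ) : ℝ≥0∞ :=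
  ∑ s, gaussPi (Fin n × Fin n) {g | B < plantVec n α s ⬝ᵥ
    ((S.state m (plantVec n α s + g)).2 *ᵥ plantVec n α s)}

lemma card_sum (c : ℝ) : ∑ _s : (Fin n → Bool) × (Fin n → Bool), ENNReal.ofReal c =
    ENNReal.ofReal (4 ^ n * c) := by
  rw [Finset.sum_const, nsmul_eq_mul, ENNReal.ofReal_mul (by positivity)]
  congr 1
  simp [Fintype.card_prod, ← mul_pow]

/-- One round in the planted model: unless energy above `B` was captured before, the state is
comparable to the unplanted one, where the next queries capture a large energy only rarely. -/
lemma capture_succ (α : ℝ) (m : ℕ) (θ B B' ℓ : ℝ) (hθ : 0 ≤ θ)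
    (hθn : 8 * (θ * α ^ 2) * n ≤ 1) :
    S.capture α (m + 1) B' ≤ S.capture α m B + (ENNReal.ofReal (4 ^ n * Real.exp (B - ℓ)) +
      ENNReal.ofReal (4 ^ n * Real.exp (ℓ + 4 * (θ * α ^ 2) * ((m + 1 : ℕ) * k) - θ * B'))) := by
  set A : (Fin n → Bool) × (Fin n → Bool) → Set (H × Matrix (Fin n × Fin n) (Fin n × Fin n) ℝ) :=
    fun s => {z | B' < plantVec n α s ⬝ᵥ (gsExt (S.q m z.1) z.2 *ᵥ plantVec n α s)} with hA
  have hAm : ∀ s, MeasurableSet (A s) := fun s =>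
    measurableSet_lt measurable_const (measurable_dot measurable_const (measurable_mulVec
      (gsList_measurable ((S.hq m).comp measurable_fst) _ measurable_snd) measurable_const))
  have h1 : ∀ s, gaussPi (Fin n × Fin n) {g | B' < plantVec n α s ⬝ᵥ
      ((S.state (m + 1) (plantVec n α s + g)).2 *ᵥ plantVec n α s)} ≤
      gaussPi (Fin n × Fin n) {g | B < plantVec n α s ⬝ᵥ
      ((S.state m (plantVec n α s + g)).2 *ᵥ plantVec n α s)} +
      (ENNReal.ofReal (Real.exp (B - ℓ)) + ENNReal.ofReal (Real.exp ℓ) *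
        gaussPi (Fin n × Fin n) {g | B' < plantVec n α s ⬝ᵥ
      ((S.state (m + 1) g).2 *ᵥ plantVec n α s)}) := by
    intro s
    refine le_trans ?_ (add_le_add_right (S.shift_bound m (plantVec n α s) (A s) (hAm s) B ℓ) _)
    refine le_trans (measure_mono ?_) (measure_union_le _ _)
    intro g hg
    rcases lt_or_ge B (plantVec n α s ⬝ᵥ ((S.state m (plantVec n α s + g)).2 *ᵥ plantVec n α s)) with h | h
    · exact Or.inl h
    · exact Or.inr ⟨hg, h⟩
  refine (Finset.sum_le_sum fun s _ => h1 s).trans ?_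
  rw [Finset.sum_add_distrib, Finset.sum_add_distrib, card_sum, ← Finset.mul_sum]
  refine add_le_add_right (add_le_add_right ?_ _) _
  refine (mul_le_mul_right (S.sum_energy_le (m + 1) α θ B' hθ hθn) _).trans_eq ?_
  rw [← ENNReal.ofReal_mul (Real.exp_pos _).le, mul_left_comm, ← Real.exp_add, add_sub_assoc]

/-- Iterating `capture_succ`: the captured energy grows by a constant factor `R` per round. -/
lemma capture_le (α θ R D : ℝ) (t : ℕ) (hθ : 0 ≤ θ) (hθn : 8 * (θ * α ^ 2) * n ≤ 1)
    (hR : θ * R = 2) (hR1 : 1 ≤ R) (hD : 0 < D) (hDt : 4 * (θ * α ^ 2) * (t * k) ≤ D) :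
    ∀ m ≤ t, S.capture α m (3 * D * R ^ m) ≤ ENNReal.ofReal (m * (4 ^ n * (2 * Real.exp (-D)))) := by
  intro m
  induction m with
  | zero =>
    intro _
    have : S.capture α 0 (3 * D * R ^ 0) = 0 := by
      unfold capture
      refine Finset.sum_eq_zero fun s _ => ?_
      have : ¬ (3 * D * R ^ 0 < 0) := by simp; linarith
      simp only [state, zero_mulVec, dotProduct_zero, this, Set.ofPred_false, measure_empty]
    rw [this]; exact zero_le
  | succ m ih =>
    intro hm
    set B := 3 * D * R ^ m with hB
    have hB3 : 3 * D ≤ B := by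
      have := one_le_pow₀ (n := m) hR1
      rw [hB]; nlinarith
    have hBs : θ * (3 * D * R ^ (m + 1)) = 2 * B := by
      rw [hB, pow_succ]; linear_combination (3 * D * R ^ m) * hR
    refine (S.capture_succ α m θ B _ (B + D) hθ hθn).trans ?_
    have hmt : 4 * (θ * α ^ 2) * ((m + 1 : ℕ) * k) ≤ D := by
      refine le_trans ?_ hDt
      have : ((m + 1 : ℕ) : ℝ) ≤ t := by exact_mod_cast hm
      gcongr
    have i1 : Real.exp (B - (B + D)) = Real.exp (-D) := by congr 1; ring
    have i2 : Real.exp (B + D + 4 * (θ * α ^ 2) * ((m + 1 : ℕ) * k) - θ * (3 * D * R ^ (m + 1))) ≤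
        Real.exp (-D) := by
      apply Real.exp_le_exp.2; rw [hBs]; linarith
    calc _ ≤ ENNReal.ofReal (m * (4 ^ n * (2 * Real.exp (-D)))) +
          (ENNReal.ofReal (4 ^ n * Real.exp (-D)) + ENNReal.ofReal (4 ^ n * Real.exp (-D))) := by
          refine add_le_add (ih (by omega)) (add_le_add ?_ ?_)
          · rw [i1]
          · exact ENNReal.ofReal_le_ofReal (by gcongr)
      _ = _ := by
          rw [← ENNReal.ofReal_add (by positivity) (by positivity),
            ← ENNReal.ofReal_add (by positivity) (by positivity)]
          congr 1
          push_cast; ring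

/-- If every fixed history is consistent with few plants, then the planted history is rarely
consistent with its own plant. -/
lemma sum_success_le (α θ R D : ℝ) (t : ℕ) (hθ : 0 ≤ θ) (hθn : 8 * (θ * α ^ 2) * n ≤ 1)
    (hR : θ * R = 2) (hR1 : 1 ≤ R) (hD : 0 < D) (hDt : 4 * (θ * α ^ 2) * (t * k) ≤ D)
    (E : (Fin n → Bool) × (Fin n → Bool) → Set H) (hE : ∀ s, MeasurableSet (E s)) (N : ℝ)
    (hN : ∀ h, (∑ s, if h ∈ E s then (1 : ℝ) else 0) ≤ N) :
    ∑ s, gaussPi (Fin n × Fin n) {g | (S.state t (plantVec n α s + g)).1 ∈ E s} ≤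
      ENNReal.ofReal (4 ^ n * ((2 * t + 1) * Real.exp (-D)) +
        Real.exp (3 * D * R ^ t + D) * N) := by
  set B := 3 * D * R ^ t with hB
  have hs := S.state_measurable t
  have hEm : ∀ s, MeasurableSet ((Prod.fst : H × Matrix (Fin n × Fin n) (Fin n × Fin n) ℝ → H) ⁻¹' E s) :=
    fun s => measurable_fst (hE s)
  have h1 : ∀ s, gaussPi (Fin n × Fin n) {g | (S.state t (plantVec n α s + g)).1 ∈ E s} ≤
      gaussPi (Fin n × Fin n) {g | B < plantVec n α s ⬝ᵥ
      ((S.state t (plantVec n α s + g)).2 *ᵥ plantVec n α s)} +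
      (ENNReal.ofReal (Real.exp (B - (B + D))) + ENNReal.ofReal (Real.exp (B + D)) *
        gaussPi (Fin n × Fin n) {g | (S.state t g).1 ∈ E s}) := by
    intro s
    refine le_trans ?_ (add_le_add_right (S.shift_bound t (plantVec n α s) _ (hEm s) B (B + D)) _)
    refine le_trans (measure_mono ?_) (measure_union_le _ _)
    intro g hg
    rcases lt_or_ge B (plantVec n α s ⬝ᵥ ((S.state t (plantVec n α s + g)).2 *ᵥ plantVec n α s)) with h | h
    · exact Or.inl h
    · exact Or.inr ⟨hg, h⟩
  have hN0 : 0 ≤ N := le_trans (Finset.sum_nonneg fun s _ => by split_ifs <;> norm_num) (hN S.h0)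
  have h2 : ∑ s, gaussPi (Fin n × Fin n) {g | (S.state t g).1 ∈ E s} ≤ ENNReal.ofReal N := by
    have hm : ∀ s, MeasurableSet {g | (S.state t g).1 ∈ E s} := fun s => hs (hEm s)
    simp_rw [← fun s => lintegral_indicator_one (μ := gaussPi (Fin n × Fin n)) (hm s)]
    rw [← lintegral_finsetSum _ (fun s _ => measurable_one.indicator (hm s))]
    refine (lintegral_mono (g := fun _ => ENNReal.ofReal N) fun g => ?_).trans (by simp)
    refine le_trans ?_ (ENNReal.ofReal_le_ofReal (hN (S.state t g).1))
    rw [ENNReal.ofReal_sum_of_nonneg (fun s _ => by split_ifs <;> norm_num)]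
    refine Finset.sum_le_sum fun s _ => ?_
    simp only [Set.indicator, Set.mem_ofPred_eq, Pi.one_apply]
    split_ifs <;> simp
  refine (Finset.sum_le_sum fun s _ => h1 s).trans ?_
  rw [Finset.sum_add_distrib, Finset.sum_add_distrib, card_sum, ← Finset.mul_sum]
  have i1 : Real.exp (B - (B + D)) = Real.exp (-D) := by congr 1; ring
  rw [i1]
  calc _ ≤ ENNReal.ofReal (t * (4 ^ n * (2 * Real.exp (-D)))) +
        (ENNReal.ofReal (4 ^ n * Real.exp (-D)) +
          ENNReal.ofReal (Real.exp (B + D)) * ENNReal.ofReal N) := by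
        exact add_le_add (S.capture_le α θ R D t hθ hθn hR hR1 hD hDt t le_rfl)
          (add_le_add_right (mul_le_mul_right h2 _) _)
    _ = _ := by
        rw [← ENNReal.ofReal_mul (Real.exp_pos _).le,
          ← ENNReal.ofReal_add (by positivity) (by positivity),
          ← ENNReal.ofReal_add (by positivity) (by positivity)]
        congr 1
        ring

end AdaptSys

end

/-! ### Plants close to a fixed matrix -/

section

/-- The planted symmetric matrix `α (u vᵀ + v uᵀ)`. -/
def plantMat (n : ℕ) (α : ℝ) (s : (Fin n → Bool) × (Fin n → Bool)) : Matrix (Fin n) (Fin n) ℝ :=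
  α • (vecMulVec (signVec s.1) (signVec s.2) + vecMulVec (signVec s.2) (signVec s.1))

lemma plantMat_form {n : ℕ} (α : ℝ) (s : (Fin n → Bool) × (Fin n → Bool)) (a b : Fin n → ℝ) :
    a ⬝ᵥ (plantMat n α s *ᵥ b) = α * ((signVec s.1 ⬝ᵥ a) * (signVec s.2 ⬝ᵥ b) +
      (signVec s.2 ⬝ᵥ a) * (signVec s.1 ⬝ᵥ b)) := by
  rw [plantMat, smul_mulVec, add_mulVec, vecMulVec_mulVec, vecMulVec_mulVec, dotProduct_smul,
    dotProduct_add, op_smul_eq_smul, op_smul_eq_smul, dotProduct_smul, dotProduct_smul,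
    dotProduct_comm a, dotProduct_comm a]
  simp only [smul_eq_mul]; ring

/-- `B` agrees with the plant `s` up to `T`, tested against all sign vectors. -/
def Close {n : ℕ} (α T : ℝ) (s : (Fin n → Bool) × (Fin n → Bool)) (B : Matrix (Fin n) (Fin n) ℝ) :
    Prop :=
  ∀ u v : Fin n → Bool, |signVec u ⬝ᵥ ((plantMat n α s - B) *ᵥ signVec v)| ≤ T

lemma abs_signVec_dot_le {n : ℕ} (u v : Fin n → Bool) : |signVec u ⬝ᵥ signVec v| ≤ n := by
  calc |signVec u ⬝ᵥ signVec v| ≤ ∑ i, |signVec u i * signVec v i| := Finset.abs_sum_le_sum_abs _ _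
    _ = ∑ _i : Fin n, (1 : ℝ) := by
        refine Finset.sum_congr rfl fun i _ => ?_
        simp only [signVec]; split_ifs <;> norm_num
    _ = n := by simp

lemma sum_exp_corr {n : ℕ} (c : ℝ) (hc : c ^ 2 = 1 / 16) (w : Fin n → Bool) :
    ∑ u : Fin n → Bool, Real.exp (c * (signVec u ⬝ᵥ signVec w) - n / 16) ≤
      2 ^ n * Real.exp (-(n / 32)) := by
  have := sum_exp_signVec_le (c • signVec w)
  rw [smul_dotProduct, dotProduct_smul, signVec_dot] at this
  simp only [smul_dotProduct, smul_eq_mul, Fintype.card_fin] at this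
  simp_rw [sub_eq_add_neg, Real.exp_add, ← Finset.sum_mul, dotProduct_comm _ (signVec w)]
  refine (mul_le_mul_of_nonneg_right this (Real.exp_pos _).le).trans_eq ?_
  rw [mul_assoc, ← Real.exp_add]
  congr 2
  linear_combination (n / 2 : ℝ) * hc

/-- Few plants are close to any given matrix `B`. If `s₀` is one of them, then any other one has a
left vector `u` with correlation at least `n / 4` in absolute value with one of the two vectors of
`s₀`, and such `u` are rare by a Chernoff bound. -/
lemma count_close {n : ℕ} (α T : ℝ) (hα : 0 < α) (hT : 4 * T ≤ α * n ^ 2)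
    (B : Matrix (Fin n) (Fin n) ℝ) :
    (∑ s, if Close α T s B then (1 : ℝ) else 0) ≤ 4 ^ n * (4 * Real.exp (-(n / 32))) := by
  by_cases hex : ∃ s0, Close α T s0 B
  swap
  · push Not at hex
    simp only [hex, if_false, Finset.sum_const_zero]
    positivity
  obtain ⟨s0, h0⟩ := hex
  set X : (Fin n → Bool) → ℝ := fun u =>
    (Real.exp (1 / 4 * (signVec u ⬝ᵥ signVec s0.1) - n / 16) +
    Real.exp (-(1 / 4) * (signVec u ⬝ᵥ signVec s0.1) - n / 16)) +
    (Real.exp (1 / 4 * (signVec u ⬝ᵥ signVec s0.2) - n / 16) +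
    Real.exp (-(1 / 4) * (signVec u ⬝ᵥ signVec s0.2) - n / 16)) with hX
  have hX0 : ∀ u, 0 ≤ X u := fun u => by positivity
  have hXe : ∀ a : ℝ, n / 4 ≤ |a| →
      1 ≤ Real.exp (1 / 4 * a - n / 16) + Real.exp (-(1 / 4) * a - n / 16) := by
    intro a ha
    have p1 := Real.exp_pos (1 / 4 * a - n / 16)
    have p2 := Real.exp_pos (-(1 / 4) * a - n / 16)
    rcases le_abs.1 ha with h | h
    · have := Real.one_le_exp (x := 1 / 4 * a - n / 16) (by linarith)
      linarith
    · have := Real.one_le_exp (x := -(1 / 4) * a - n / 16) (by linarith)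
      linarith
  have hle : ∀ s, (if Close α T s B then (1 : ℝ) else 0) ≤ X s.1 := by
    intro s
    split_ifs with hs
    swap
    · exact hX0 _
    by_cases c1 : (n : ℝ) / 4 ≤ |signVec s.1 ⬝ᵥ signVec s0.1|
    · have := hXe _ c1
      simp only [hX]
      linarith [Real.exp_pos (1 / 4 * (signVec s.1 ⬝ᵥ signVec s0.2) - n / 16),
        Real.exp_pos (-(1 / 4) * (signVec s.1 ⬝ᵥ signVec s0.2) - n / 16)]
    by_cases c2 : (n : ℝ) / 4 ≤ |signVec s.1 ⬝ᵥ signVec s0.2|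
    · have := hXe _ c2
      simp only [hX]
      linarith [Real.exp_pos (1 / 4 * (signVec s.1 ⬝ᵥ signVec s0.1) - n / 16),
        Real.exp_pos (-(1 / 4) * (signVec s.1 ⬝ᵥ signVec s0.1) - n / 16)]
    exfalso
    push Not at c1 c2
    have a1 := hs s0.1 s0.2
    have a2 := h0 s0.1 s0.2
    rw [sub_mulVec, dotProduct_sub, plantMat_form] at a1 a2
    rw [signVec_dot, signVec_dot, Fintype.card_fin] at a2
    have a1' := (abs_le.1 a1).1
    have a2' := (abs_le.1 a2).2
    have b1 := abs_signVec_dot_le s.2 s0.2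
    have b2 := abs_signVec_dot_le s.2 s0.1
    have npos : (0 : ℝ) < n := by
      have := abs_nonneg (signVec s.1 ⬝ᵥ signVec s0.1); linarith
    have d1 : (signVec s.1 ⬝ᵥ signVec s0.1) * (signVec s.2 ⬝ᵥ signVec s0.2) < n / 4 * n := by
      refine (le_abs_self _).trans_lt ?_
      rw [abs_mul]
      calc _ ≤ |signVec s.1 ⬝ᵥ signVec s0.1| * n := by gcongr
        _ < _ := by gcongr
    have d2 : (signVec s.2 ⬝ᵥ signVec s0.1) * (signVec s.1 ⬝ᵥ signVec s0.2) < n * (n / 4) := by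
      refine (le_abs_self _).trans_lt ?_
      rw [abs_mul]
      calc _ ≤ n * |signVec s.1 ⬝ᵥ signVec s0.2| := by gcongr
        _ < _ := by gcongr
    have d3 : α * ((signVec s.1 ⬝ᵥ signVec s0.1) * (signVec s.2 ⬝ᵥ signVec s0.2) +
        (signVec s.2 ⬝ᵥ signVec s0.1) * (signVec s.1 ⬝ᵥ signVec s0.2)) < α * (n ^ 2 / 2) := by
      gcongr
      linarith
    have d4 : α * (n * n) ≤ α * (n * n + (signVec s0.2 ⬝ᵥ signVec s0.1) *
        (signVec s0.1 ⬝ᵥ signVec s0.2)) := by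
      gcongr
      rw [dotProduct_comm (signVec s0.2)]
      linarith [mul_self_nonneg (signVec s0.1 ⬝ᵥ signVec s0.2)]
    nlinarith
  calc _ ≤ ∑ s : (Fin n → Bool) × (Fin n → Bool), X s.1 := Finset.sum_le_sum fun s _ => hle s
    _ = 2 ^ n * ∑ u, X u := by
        rw [Fintype.sum_prod_type]
        simp [Finset.mul_sum]
    _ ≤ 2 ^ n * (4 * (2 ^ n * Real.exp (-(n / 32)))) := by
        gcongr
        simp only [hX, Finset.sum_add_distrib]
        have e1 := sum_exp_corr (1 / 4) (by norm_num) s0.1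
        have e2 := sum_exp_corr (-(1 / 4)) (by norm_num) s0.1
        have e3 := sum_exp_corr (1 / 4) (by norm_num) s0.2
        have e4 := sum_exp_corr (-(1 / 4)) (by norm_num) s0.2
        linarith
    _ = _ := by
        rw [show (4 : ℝ) = 2 * 2 by norm_num, mul_pow]; ring

end

/-! ### Operator norm of a Gaussian matrix -/

section

/-- An integer vector as a real vector. -/
def intVec {n : ℕ} (z : Fin n → ℤ) : Fin n → ℝ := fun i => (z i : ℝ)

/-- Integer vectors of squared length at most `7n`; after scaling by `1/(2√n)` they form a
`1/4`-net of the Euclidean unit ball. The bound on the entries is implied and only makes the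
finiteness visible. -/
def net (n : ℕ) : Finset (Fin n → ℤ) :=
  (Fintype.piFinset fun _ => Finset.Icc (-(7 * n : ℤ)) (7 * n)).filter
    fun z => intVec z ⬝ᵥ intVec z ≤ 7 * n

lemma mem_net {n : ℕ} {z : Fin n → ℤ} : z ∈ net n ↔ intVec z ⬝ᵥ intVec z ≤ 7 * n := by
  simp only [net, Finset.mem_filter, and_iff_right_iff_imp, Fintype.mem_piFinset, Finset.mem_Icc]
  intro h i
  have h1 : ((z i : ℝ)) * z i ≤ 7 * n := by
    refine le_trans ?_ h
    exact Finset.single_le_sum (f := fun i => intVec z i * intVec z i)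
      (fun i _ => mul_self_nonneg _) (Finset.mem_univ i)
  have h2 : z i * z i ≤ 7 * n := by exact_mod_cast h1
  constructor <;> nlinarith [sq_nonneg (z i - 1), sq_nonneg (z i + 1), Int.le_self_sq (z i),
    Int.le_self_sq (-z i)]

lemma sum_exp_neg_sq_le (N : ℕ) : ∑ j ∈ Finset.Icc (-(N : ℤ)) N, Real.exp (-((j : ℝ) * j)) ≤ 4 := by
  have hsub : Finset.Icc (-(N : ℤ)) N ⊆ (Finset.range (N + 1)).image (fun a : ℕ => (a : ℤ)) ∪
      (Finset.range (N + 1)).image (fun a : ℕ => -(a : ℤ)) := by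
    intro j hj
    simp only [Finset.mem_Icc] at hj
    simp only [Finset.mem_union, Finset.mem_image, Finset.mem_range]
    rcases le_total 0 j with h | h
    · exact Or.inl ⟨j.toNat, by omega, by omega⟩
    · exact Or.inr ⟨(-j).toNat, by omega, by omega⟩
  have hterm : ∀ a : ℕ, Real.exp (-((a : ℝ) * a)) ≤ (1 / 2 : ℝ) ^ a := by
    intro a
    have h1 : (a : ℝ) ≤ a * a := by exact_mod_cast Nat.le_mul_self a
    have h2 : Real.exp (-1) ≤ 1 / 2 := by
      rw [Real.exp_neg, ← one_div]
      exact one_div_le_one_div_of_le (by norm_num) (by linarith [Real.add_one_le_exp (1 : ℝ)])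
    calc Real.exp (-((a : ℝ) * a)) ≤ Real.exp (a * (-1)) := Real.exp_le_exp.2 (by linarith)
      _ = Real.exp (-1) ^ a := Real.exp_nat_mul _ _
      _ ≤ _ := by gcongr
  have hgeo : ∑ a ∈ Finset.range (N + 1), Real.exp (-((a : ℝ) * a)) ≤ 2 :=
    (Finset.sum_le_sum fun a _ => hterm a).trans (sum_geometric_two_le _)
  refine (Finset.sum_le_sum_of_subset_of_nonneg hsub fun _ _ _ => (Real.exp_pos _).le).trans ?_
  have hui := Finset.sum_union_inter (s₁ := (Finset.range (N + 1)).image (fun a : ℕ => (a : ℤ)))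
    (s₂ := (Finset.range (N + 1)).image (fun a : ℕ => -(a : ℤ)))
    (f := fun j : ℤ => Real.exp (-((j : ℝ) * j)))
  have h0 : 0 ≤ ∑ j ∈ (Finset.range (N + 1)).image (fun a : ℕ => (a : ℤ)) ∩
      (Finset.range (N + 1)).image (fun a : ℕ => -(a : ℤ)), Real.exp (-((j : ℝ) * j)) :=
    Finset.sum_nonneg fun _ _ => (Real.exp_pos _).le
  rw [Finset.sum_image (by intro a _ b _ h; simpa using h),
    Finset.sum_image (by intro a _ b _ h; simpa using h)] at hui
  simp only [Int.cast_neg, Int.cast_natCast, neg_mul_neg] at hui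
  linarith

lemma card_net_le (n : ℕ) : ((net n).card : ℝ) ≤ Real.exp (9 * n) := by
  have h1 : ((net n).card : ℝ) ≤ ∑ z ∈ Fintype.piFinset (fun _ : Fin n =>
      Finset.Icc (-((7 * n : ℕ) : ℤ)) (7 * n : ℕ)),
      Real.exp (7 * n) * ∏ i, Real.exp (-((z i : ℝ) * z i)) := by
    rw [Finset.card_eq_sum_ones]
    push_cast
    refine (Finset.sum_le_sum (g := fun z : Fin n → ℤ => Real.exp (7 * n) *
      ∏ i, Real.exp (-((z i : ℝ) * z i))) fun z hz => ?_).trans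
      (Finset.sum_le_sum_of_subset_of_nonneg (Finset.filter_subset _ _) fun z _ _ => by positivity)
    rw [← Real.exp_sum, ← Real.exp_add]
    apply Real.one_le_exp
    have := mem_net.1 hz
    simp only [dotProduct, intVec] at this
    rw [Finset.sum_neg_distrib]
    linarith
  refine h1.trans ?_
  rw [← Finset.mul_sum, Finset.sum_prod_piFinset (Finset.Icc (-((7 * n : ℕ) : ℤ)) (7 * n : ℕ))
    (fun _ j => Real.exp (-((j : ℝ) * j)))]
  rw [Finset.prod_const, Finset.card_univ, Fintype.card_fin]
  have h4 : (4 : ℝ) ≤ Real.exp 2 := by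
    have := Real.exp_one_gt_d9
    rw [show (2 : ℝ) = 1 + 1 by norm_num, Real.exp_add]; nlinarith
  calc _ ≤ Real.exp (7 * n) * Real.exp 2 ^ n := by
        gcongr
        exact (sum_exp_neg_sq_le _).trans h4
    _ = _ := by rw [← Real.exp_nat_mul, ← Real.exp_add]; congr 1; ring

/-- Vectors in the unit ball are within `1/4` of a scaled net point. -/
lemma exists_net {n : ℕ} (hn : 1 ≤ n) (x : Fin n → ℝ) (hx : x ⬝ᵥ x ≤ 1) :
    ∃ z ∈ net n, ((4 : ℝ) • (x - (2 * √n)⁻¹ • intVec z)) ⬝ᵥ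
      ((4 : ℝ) • (x - (2 * √n)⁻¹ • intVec z)) ≤ 1 := by
  have hn' : (0 : ℝ) < n := by exact_mod_cast hn
  have hsq : √(n : ℝ) * √n = n := Real.mul_self_sqrt hn'.le
  have hs0 : 0 < √(n : ℝ) := Real.sqrt_pos.2 hn'
  set c := 2 * √(n : ℝ) with hc
  have hc0 : 0 < c := by positivity
  have hcc : c * c = 4 * n := by rw [hc]; linear_combination 4 * hsq
  set z : Fin n → ℤ := fun i => round (c * x i) with hz
  have hr : ∀ i, (c * x i - z i) ^ 2 ≤ 1 / 4 := by
    intro i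
    have := abs_le.1 (abs_sub_round (c * x i))
    have h1 : -(1/2) ≤ c * x i - z i := this.1
    have h2 : c * x i - z i ≤ 1/2 := this.2
    nlinarith
  have hxs : ∑ i, x i ^ 2 ≤ 1 := by simpa [dotProduct, sq] using hx
  refine ⟨z, mem_net.2 ?_, ?_⟩
  · calc intVec z ⬝ᵥ intVec z ≤ ∑ i, (5 / 4 * (4 * n * x i ^ 2) + 5 / 4) := by
          refine Finset.sum_le_sum fun i _ => ?_
          simp only [intVec]
          have h := hr i
          have e : c * c * x i ^ 2 = (c * x i) ^ 2 := by ring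
          rw [← hcc, e]
          nlinarith [sq_nonneg (c * x i + 4 * (c * x i - z i))]
      _ = 5 * n * ∑ i, x i ^ 2 + 5 / 4 * n := by
          rw [Finset.sum_add_distrib, Finset.mul_sum]
          simp only [Finset.sum_const, Finset.card_univ, Fintype.card_fin, nsmul_eq_mul]
          congr 1
          · exact Finset.sum_congr rfl fun i _ => by ring
          · ring
      _ ≤ _ := by nlinarith
  · calc _ = ∑ i, (4 / n) * (c * x i - z i) ^ 2 := by
          refine Finset.sum_congr rfl fun i _ => ?_
          simp only [Pi.smul_apply, Pi.sub_apply, smul_eq_mul, intVec]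
          have e : c * x i - z i = c * (x i - c⁻¹ * z i) := by field_simp
          rw [e, mul_pow, sq c, hcc]
          field_simp
      _ ≤ ∑ _i : Fin n, (4 / n : ℝ) * (1 / 4) := by
          refine Finset.sum_le_sum fun i _ => ?_
          gcongr
          exact hr i
      _ = 1 := by
          simp only [Finset.sum_const, Finset.card_univ, Fintype.card_fin, nsmul_eq_mul]
          field_simp

lemma form_bdd {n : ℕ} (G : Matrix (Fin n) (Fin n) ℝ) :
    BddAbove {a | ∃ x y : Fin n → ℝ, x ⬝ᵥ x ≤ 1 ∧ y ⬝ᵥ y ≤ 1 ∧ a = x ⬝ᵥ (G *ᵥ y)} := by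
  refine ⟨∑ i, ∑ j, |G i j|, ?_⟩
  rintro a ⟨x, y, hx, hy, rfl⟩
  have hle : ∀ x : Fin n → ℝ, x ⬝ᵥ x ≤ 1 → ∀ i, |x i| ≤ 1 := by
    intro x hx i
    have : x i * x i ≤ 1 := le_trans (Finset.single_le_sum (f := fun i => x i * x i)
      (fun i _ => mul_self_nonneg _) (Finset.mem_univ i)) hx
    exact abs_le_one_iff_mul_self_le_one.2 this
  simp only [dotProduct, mulVec, Finset.mul_sum]
  refine Finset.sum_le_sum fun i _ => Finset.sum_le_sum fun j _ => ?_
  refine (le_abs_self _).trans ?_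
  rw [abs_mul, abs_mul]
  have h1 := hle x hx i
  have h2 := hle y hy j
  calc |x i| * (|G i j| * |y j|) ≤ 1 * (|G i j| * 1) := by gcongr
    _ = _ := by ring

/-- A bound for the bilinear form on the net gives one on the unit ball. -/
lemma form_le_of_net {n : ℕ} (hn : 1 ≤ n) (G : Matrix (Fin n) (Fin n) ℝ) (τ : ℝ)
    (h : ∀ z ∈ net n, ∀ w ∈ net n, intVec z ⬝ᵥ (G *ᵥ intVec w) ≤ τ) (x y : Fin n → ℝ)
    (hx : x ⬝ᵥ x ≤ 1) (hy : y ⬝ᵥ y ≤ 1) : x ⬝ᵥ (G *ᵥ y) ≤ 4 / 7 * (τ / n) := by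
  have hn' : (0 : ℝ) < n := by exact_mod_cast hn
  have hsq : √(n : ℝ) * √n = n := Real.mul_self_sqrt hn'.le
  have hs0 : 0 < √(n : ℝ) := Real.sqrt_pos.2 hn'
  set V := {a | ∃ x y : Fin n → ℝ, x ⬝ᵥ x ≤ 1 ∧ y ⬝ᵥ y ≤ 1 ∧ a = x ⬝ᵥ (G *ᵥ y)} with hV
  have hM : ∀ x y : Fin n → ℝ, x ⬝ᵥ x ≤ 1 → y ⬝ᵥ y ≤ 1 → x ⬝ᵥ (G *ᵥ y) ≤ sSup V :=
    fun x y hx hy => le_csSup (form_bdd G) ⟨x, y, hx, hy, rfl⟩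
  have hkey : sSup V ≤ τ / (4 * n) + 9 / 16 * sSup V := by
    refine csSup_le ⟨_, 0, 0, by simp, by simp, rfl⟩ ?_
    rintro a ⟨x, y, hx, hy, rfl⟩
    obtain ⟨z, hz, hxz⟩ := exists_net hn x hx
    obtain ⟨w, hw, hyw⟩ := exists_net hn y hy
    set z' := (2 * √(n : ℝ))⁻¹ • intVec z with hz'
    set w' := (2 * √(n : ℝ))⁻¹ • intVec w with hw'
    have e1 : z' ⬝ᵥ (G *ᵥ w') ≤ τ / (4 * n) := by
      rw [hz', hw', mulVec_smul, smul_dotProduct, dotProduct_smul, smul_eq_mul, smul_eq_mul,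
        ← mul_assoc, ← mul_inv, show 2 * √(n : ℝ) * (2 * √n) = 4 * n by linear_combination 4 * hsq,
        inv_mul_eq_div]
      gcongr
      exact h z hz w hw
    have e2 := hM _ y hxz hy
    have e3 := hM x _ hx hyw
    have e4 := hM (-((4 : ℝ) • (x - z'))) _ (by simpa only [neg_dotProduct_neg] using hxz) hyw
    have lin : x ⬝ᵥ (G *ᵥ y) = z' ⬝ᵥ (G *ᵥ w') + (1 / 4) * (((4 : ℝ) • (x - z')) ⬝ᵥ (G *ᵥ y)) +
        (1 / 4) * (x ⬝ᵥ (G *ᵥ ((4 : ℝ) • (y - w')))) +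
        (1 / 16) * ((-((4 : ℝ) • (x - z'))) ⬝ᵥ (G *ᵥ ((4 : ℝ) • (y - w')))) := by
      simp only [mulVec_smul, smul_dotProduct, dotProduct_smul, smul_eq_mul, neg_dotProduct,
        Matrix.mulVec_sub, sub_dotProduct, dotProduct_sub]
      ring
    rw [lin]
    linarith
  refine (hM x y hx hy).trans ?_
  have : τ / (4 * n) = (τ / n) / 4 := by field_simp
  rw [this] at hkey
  linarith

/-- The Gaussian matrix with entries `g`. -/
def gMat {n : ℕ} (g : Fin n × Fin n → ℝ) : Matrix (Fin n) (Fin n) ℝ := Matrix.of fun i j => g (i, j)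

lemma gMat_form {n : ℕ} (g : Fin n × Fin n → ℝ) (x y : Fin n → ℝ) :
    x ⬝ᵥ (gMat g *ᵥ y) = tens x y ⬝ᵥ g := by
  simp only [dotProduct, mulVec, tens, gMat, Fintype.sum_prod_type, Finset.mul_sum, Matrix.of_apply]
  exact Finset.sum_congr rfl fun i _ => Finset.sum_congr rfl fun j _ => by ring

/-- The event that the Gaussian matrix is small on the net. -/
def goodSet (n : ℕ) : Set (Fin n × Fin n → ℝ) :=
  {g | ∀ z ∈ net n, ∀ w ∈ net n, intVec z ⬝ᵥ (gMat g *ᵥ intVec w) ≤ 50 * (n * √n)}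

lemma goodSet_eq (n : ℕ) : goodSet n = ⋂ z ∈ net n, ⋂ w ∈ net n,
    {g | tens (intVec z) (intVec w) ⬝ᵥ g ≤ 50 * (n * √n)} := by
  ext g
  simp [goodSet, gMat_form]

lemma goodSet_measurable (n : ℕ) : MeasurableSet (goodSet n) := by
  rw [goodSet_eq]
  refine Finset.measurableSet_biInter _ fun z _ => Finset.measurableSet_biInter _ fun w _ => ?_
  exact measurableSet_le (measurable_dot measurable_const measurable_id) measurable_const

lemma gauss_tail {ι : Type*} [Fintype ι] (y : ι → ℝ) (l τ : ℝ) (hl : 0 ≤ l) :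
    gaussPi ι {g | τ < y ⬝ᵥ g} ≤ ENNReal.ofReal (Real.exp (l ^ 2 * (y ⬝ᵥ y) / 2 - l * τ)) := by
  have hm : MeasurableSet {g : ι → ℝ | τ < y ⬝ᵥ g} :=
    measurableSet_lt measurable_const (measurable_dot measurable_const measurable_id)
  have hm2 : Measurable fun g : ι → ℝ => (l • y) ⬝ᵥ g :=
    measurable_dot measurable_const measurable_id
  rw [← lintegral_indicator_one hm]
  calc _ ≤ ∫⁻ g, ENNReal.ofReal (Real.exp (-(l * τ))) *
        ENNReal.ofReal (Real.exp ((l • y) ⬝ᵥ g)) ∂(gaussPi ι) := by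
        refine lintegral_mono fun g => ?_
        by_cases hg : g ∈ {g : ι → ℝ | τ < y ⬝ᵥ g}
        swap
        · rw [Set.indicator_of_notMem hg]; exact zero_le
        rw [Set.indicator_of_mem hg]
        rw [← ENNReal.ofReal_mul (Real.exp_pos _).le, ← Real.exp_add, Pi.one_apply,
          ← ENNReal.ofReal_one]
        apply ENNReal.ofReal_le_ofReal
        apply Real.one_le_exp
        rw [smul_dotProduct, smul_eq_mul]
        have hg' : τ < y ⬝ᵥ g := hg
        have := mul_le_mul_of_nonneg_left hg'.le hl
        linarith
    _ = _ := by
        rw [lintegral_const_mul _ (by fun_prop), lintegral_exp_dot,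
          ← ENNReal.ofReal_mul (Real.exp_pos _).le, ← Real.exp_add]
        congr 2
        rw [smul_dotProduct, dotProduct_smul, smul_eq_mul, smul_eq_mul]; ring

lemma goodSet_compl_le {n : ℕ} (hn : 1 ≤ n) :
    gaussPi (Fin n × Fin n) (goodSet n)ᶜ ≤ ENNReal.ofReal (Real.exp (-n)) := by
  have hn' : (0 : ℝ) < n := by exact_mod_cast hn
  have hsq : √(n : ℝ) * √n = n := Real.mul_self_sqrt hn'.le
  have hs0 : 0 < √(n : ℝ) := Real.sqrt_pos.2 hn'
  have h1 : (goodSet n)ᶜ ⊆ ⋃ z ∈ net n, ⋃ w ∈ net n,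
      {g | 50 * (n * √n) < tens (intVec z) (intVec w) ⬝ᵥ g} := by
    intro g hg
    rw [goodSet_eq] at hg
    simpa using hg
  have h2 : ∀ z ∈ net n, ∀ w ∈ net n, gaussPi (Fin n × Fin n)
      {g | 50 * (n * √n) < tens (intVec z) (intVec w) ⬝ᵥ g} ≤
      ENNReal.ofReal (Real.exp (-(51 / 2 * n))) := by
    intro z hz w hw
    refine (gauss_tail _ (√n)⁻¹ _ (by positivity)).trans (ENNReal.ofReal_le_ofReal
      (Real.exp_le_exp.2 ?_))
    rw [tens_dot, inv_pow, sq, hsq]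
    have e : (√(n : ℝ))⁻¹ * (50 * (n * √n)) = 50 * n := by field_simp
    rw [e]
    have hz := mem_net.1 hz
    have hw := mem_net.1 hw
    have hw0 : 0 ≤ intVec w ⬝ᵥ intVec w := Finset.sum_nonneg fun i _ => mul_self_nonneg _
    have : (intVec z ⬝ᵥ intVec z) * (intVec w ⬝ᵥ intVec w) ≤ (7 * n) * (7 * n) := by gcongr
    have h3 : (n : ℝ)⁻¹ * ((intVec z ⬝ᵥ intVec z) * (intVec w ⬝ᵥ intVec w)) ≤ 49 * n := by
      rw [inv_mul_le_iff₀ hn']; linarith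
    linarith
  refine (measure_mono h1).trans ?_
  refine (measure_biUnion_finset_le _ _).trans ?_
  refine (Finset.sum_le_sum fun z hz => (measure_biUnion_finset_le _ _).trans
    (Finset.sum_le_sum fun w hw => h2 z hz w hw)).trans ?_
  simp only [Finset.sum_const, nsmul_eq_mul]
  have hc := card_net_le n
  rw [← ENNReal.ofReal_natCast, ← ENNReal.ofReal_mul (by positivity),
    ← ENNReal.ofReal_mul (by positivity)]
  apply ENNReal.ofReal_le_ofReal
  calc _ ≤ Real.exp (9 * n) * (Real.exp (9 * n) * Real.exp (-(51 / 2 * n))) := by gcongr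
    _ ≤ _ := by
        rw [← Real.exp_add, ← Real.exp_add]
        apply Real.exp_le_exp.2
        linarith

/-- On the good event the operator norm is at most `30 √n`. -/
lemma goodSet_form {n : ℕ} (hn : 1 ≤ n) {g : Fin n × Fin n → ℝ} (hg : g ∈ goodSet n)
    (x y : Fin n → ℝ) (hx : x ⬝ᵥ x ≤ 1) (hy : y ⬝ᵥ y ≤ 1) :
    x ⬝ᵥ (gMat g *ᵥ y) ≤ 30 * √n := by
  have hn' : (0 : ℝ) < n := by exact_mod_cast hn
  refine (form_le_of_net hn _ _ hg x y hx hy).trans ?_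
  have : 50 * (n * √(n : ℝ)) / n = 50 * √n := by field_simp
  rw [this]
  have := Real.sqrt_nonneg (n : ℝ)
  linarith

end

/-! ### From low-rank approximation to closeness to the plant -/

section

lemma sqNorm_eq_dot {ι : Type*} [Fintype ι] (x : ι → ℝ) : sqNorm x = x ⬝ᵥ x := by
  simp [sqNorm, dotProduct, sq]

lemma specNorm_bdd {n : ℕ} (A : Matrix (Fin n) (Fin n) ℝ) :
    BddAbove ((fun x : Fin n → ℝ => Real.sqrt (sqNorm (A.mulVec x))) '' {x | sqNorm x ≤ 1}) := by
  refine ⟨√(∑ i, (∑ j, |A i j|) ^ 2), ?_⟩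
  rintro _ ⟨x, hx, rfl⟩
  have hx : sqNorm x ≤ 1 := hx
  rw [sqNorm_eq_dot] at hx
  have hle : ∀ i, |x i| ≤ 1 := by
    intro i
    have : x i * x i ≤ 1 := le_trans (Finset.single_le_sum (f := fun i => x i * x i)
      (fun i _ => mul_self_nonneg _) (Finset.mem_univ i)) hx
    exact abs_le_one_iff_mul_self_le_one.2 this
  apply Real.sqrt_le_sqrt
  refine Finset.sum_le_sum fun i _ => ?_
  rw [← sq_abs]
  have : |(A *ᵥ x) i| ≤ ∑ j, |A i j| := by
    simp only [mulVec, dotProduct]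
    refine (Finset.abs_sum_le_sum_abs _ _).trans (Finset.sum_le_sum fun j _ => ?_)
    rw [abs_mul]
    exact mul_le_of_le_one_right (abs_nonneg _) (hle j)
  gcongr

lemma specNorm_nonneg {n : ℕ} (A : Matrix (Fin n) (Fin n) ℝ) : 0 ≤ specNorm A := by
  apply Real.sSup_nonneg
  rintro _ ⟨x, _, rfl⟩
  positivity

lemma form_le_specNorm {n : ℕ} (A : Matrix (Fin n) (Fin n) ℝ) (x y : Fin n → ℝ)
    (hx : x ⬝ᵥ x ≤ 1) (hy : y ⬝ᵥ y ≤ 1) : x ⬝ᵥ (A *ᵥ y) ≤ specNorm A := by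
  have h1 : √(sqNorm (A *ᵥ y)) ≤ specNorm A :=
    le_csSup (specNorm_bdd A) ⟨y, by rw [Set.mem_ofPred_eq, sqNorm_eq_dot]; exact hy, rfl⟩
  refine le_trans ?_ h1
  apply Real.le_sqrt_of_sq_le
  have cs := Finset.sum_mul_sq_le_sq_mul_sq Finset.univ x (A *ᵥ y)
  have hx' : ∑ i, x i ^ 2 ≤ 1 := by simpa [dotProduct, sq] using hx
  have h0 : 0 ≤ ∑ i, (A *ᵥ y) i ^ 2 := Finset.sum_nonneg fun i _ => sq_nonneg _
  calc _ ≤ (∑ i, x i ^ 2) * ∑ i, (A *ᵥ y) i ^ 2 := cs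
    _ ≤ 1 * ∑ i, (A *ᵥ y) i ^ 2 := by gcongr
    _ = _ := one_mul _

lemma specNorm_le_of_form {n : ℕ} (A : Matrix (Fin n) (Fin n) ℝ) (c : ℝ)
    (h : ∀ x y : Fin n → ℝ, x ⬝ᵥ x ≤ 1 → y ⬝ᵥ y ≤ 1 → x ⬝ᵥ (A *ᵥ y) ≤ c) : specNorm A ≤ c := by
  refine csSup_le ⟨_, 0, by simp [sqNorm], rfl⟩ ?_
  rintro _ ⟨y, hy, rfl⟩
  have hy : sqNorm y ≤ 1 := hy
  rw [sqNorm_eq_dot] at hy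
  simp only [sqNorm_eq_dot]
  set w := A *ᵥ y with hw
  have hw0 : 0 ≤ w ⬝ᵥ w := Finset.sum_nonneg fun i _ => mul_self_nonneg _
  rcases hw0.eq_or_lt with h0 | h0
  · rw [← h0, Real.sqrt_zero]
    simpa using h 0 0 (by simp) (by simp)
  · have hs := Real.sqrt_pos.2 h0
    have hss := Real.mul_self_sqrt hw0
    have := h ((√(w ⬝ᵥ w))⁻¹ • w) y (by
      rw [smul_dotProduct, dotProduct_smul, smul_eq_mul, smul_eq_mul]
      refine le_of_eq ?_
      nth_rewrite 3 [← hss]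
      field_simp) hy
    refine le_trans (le_of_eq ?_) this
    rw [smul_dotProduct, smul_eq_mul, ← hw]
    nth_rewrite 3 [← hss]
    field_simp

lemma singVal_le {n : ℕ} (A X : Matrix (Fin n) (Fin n) ℝ) (r : ℕ) (hX : X.rank ≤ r) :
    singVal A (r + 1) ≤ specNorm (A - X) := by
  refine csInf_le ⟨0, ?_⟩ ⟨X, by simpa using hX, rfl⟩
  rintro _ ⟨Y, _, rfl⟩
  exact specNorm_nonneg _

/-- The symmetric matrix `G + Gᵀ`. -/
def symMat {n : ℕ} (g : Fin n × Fin n → ℝ) : Matrix (Fin n) (Fin n) ℝ := gMat g + (gMat g)ᵀ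

lemma symMat_isSymm {n : ℕ} (g : Fin n × Fin n → ℝ) : (symMat g).IsSymm := by
  unfold symMat Matrix.IsSymm
  rw [transpose_add, transpose_transpose, add_comm]

lemma symMat_add {n : ℕ} (α : ℝ) (s : (Fin n → Bool) × (Fin n → Bool)) (g : Fin n × Fin n → ℝ) :
    symMat (plantVec n α s + g) = plantMat n α s + symMat g := by
  ext i j
  simp [symMat, gMat, plantMat, plantVec, tens, vecMulVec_apply]
  ring

lemma symMat_form {n : ℕ} (hn : 1 ≤ n) {g : Fin n × Fin n → ℝ} (hg : g ∈ goodSet n)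
    (x y : Fin n → ℝ) (hx : x ⬝ᵥ x ≤ 1) (hy : y ⬝ᵥ y ≤ 1) :
    x ⬝ᵥ (symMat g *ᵥ y) ≤ 60 * √n := by
  have h1 := goodSet_form hn hg x y hx hy
  have h2 := goodSet_form hn hg y x hy hx
  rw [symMat, add_mulVec, dotProduct_add, dotProduct_mulVec x (gMat g)ᵀ, vecMul_transpose,
    dotProduct_comm _ y]
  linarith

lemma mat_rank_add_le {n : ℕ} (A B : Matrix (Fin n) (Fin n) ℝ) :
    (A + B).rank ≤ A.rank + B.rank := by
  unfold Matrix.rank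
  rw [mulVecLin_add]
  refine (Submodule.finrank_mono ?_).trans
    (Submodule.finrank_add_le_finrank_add_finrank (LinearMap.range A.mulVecLin)
      (LinearMap.range B.mulVecLin))
  rintro _ ⟨x, rfl⟩
  exact Submodule.add_mem_sup ⟨x, rfl⟩ ⟨x, rfl⟩

lemma plantMat_rank {n : ℕ} (α : ℝ) (s : (Fin n → Bool) × (Fin n → Bool)) :
    (plantMat n α s).rank ≤ 2 := by
  rw [plantMat, smul_add, ← smul_vecMulVec, ← smul_vecMulVec]
  refine (mat_rank_add_le _ _).trans ?_
  have h1 := rank_vecMulVec_le (α • signVec s.1) (signVec s.2)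
  have h2 := rank_vecMulVec_le (α • signVec s.2) (signVec s.1)
  omega

/-- A successful output on a planted input with good noise is close to the plant. -/
lemma close_of_success {n r : ℕ} (hn : 1 ≤ n) (hr : 2 ≤ r) (α : ℝ)
    (s : (Fin n → Bool) × (Fin n → Bool)) {g : Fin n × Fin n → ℝ} (hg : g ∈ goodSet n)
    (B : Matrix (Fin n) (Fin n) ℝ)
    (hB : specNorm (symMat (plantVec n α s + g) - B) ≤
      2 * singVal (symMat (plantVec n α s + g)) (r + 1)) :
    Close α (180 * (n * √n)) s B := by
  have hn' : (0 : ℝ) < n := by exact_mod_cast hn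
  have hsq : √(n : ℝ) * √n = n := Real.mul_self_sqrt hn'.le
  have hs0 : 0 < √(n : ℝ) := Real.sqrt_pos.2 hn'
  have h1 : singVal (symMat (plantVec n α s + g)) (r + 1) ≤ 60 * √n := by
    refine (singVal_le _ (plantMat n α s) r ((plantMat_rank α s).trans hr)).trans ?_
    rw [symMat_add, add_sub_cancel_left]
    exact specNorm_le_of_form _ _ fun x y hx hy => symMat_form hn hg x y hx hy
  have hunit : ∀ x y : Fin n → ℝ, x ⬝ᵥ x ≤ 1 → y ⬝ᵥ y ≤ 1 →
      x ⬝ᵥ ((plantMat n α s - B) *ᵥ y) ≤ 180 * √n := by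
    intro x y hx hy
    have e : plantMat n α s - B = (symMat (plantVec n α s + g) - B) - symMat g := by
      rw [symMat_add]; abel
    have f1 := form_le_specNorm (symMat (plantVec n α s + g) - B) x y hx hy
    have f2 := symMat_form hn hg (-x) y (by simpa using hx) hy
    rw [neg_dotProduct] at f2
    rw [e, sub_mulVec, dotProduct_sub]
    linarith
  have hsc : ∀ x : Fin n → ℝ, x ⬝ᵥ x = n → ((√(n : ℝ))⁻¹ • x) ⬝ᵥ ((√(n : ℝ))⁻¹ • x) ≤ 1 := by
    intro x hx
    rw [smul_dotProduct, dotProduct_smul, smul_eq_mul, smul_eq_mul, hx, ← mul_assoc, ← mul_inv, hsq,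
      inv_mul_cancel₀ hn'.ne']
  have hgen : ∀ x y : Fin n → ℝ, x ⬝ᵥ x = n → y ⬝ᵥ y = n →
      x ⬝ᵥ ((plantMat n α s - B) *ᵥ y) ≤ 180 * (n * √n) := by
    intro x y hx hy
    have := hunit _ _ (hsc x hx) (hsc y hy)
    rw [mulVec_smul, smul_dotProduct, dotProduct_smul, smul_eq_mul, smul_eq_mul, ← mul_assoc,
      ← mul_inv, hsq, inv_mul_le_iff₀ hn'] at this
    linarith
  intro u v
  have hu : signVec u ⬝ᵥ signVec u = n := by simpa using signVec_dot u
  have hv : signVec v ⬝ᵥ signVec v = n := by simpa using signVec_dot v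
  rw [abs_le']
  refine ⟨hgen _ _ hu hv, ?_⟩
  rw [← neg_dotProduct]
  exact hgen _ _ (by simpa using hu) hv

/-- The linear map `g ↦ vec (G + Gᵀ)` as a matrix. -/
def symLift (n : ℕ) : Matrix (Fin (n * n)) (Fin n × Fin n) ℝ :=
  Matrix.of fun l p => (if finProdFinEquiv.symm l = p then 1 else 0) +
    (if (finProdFinEquiv.symm l).swap = p then 1 else 0)

lemma symLift_mulVec {n : ℕ} (g : Fin n × Fin n → ℝ) :
    symLift n *ᵥ g = _root_.vec n (symMat g) := by
  ext l
  simp only [mulVec, dotProduct, symLift, of_apply, add_mul, ite_mul, one_mul, zero_mul,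
    Finset.sum_add_distrib, Finset.sum_ite_eq, Finset.mem_univ, if_true]
  rfl

variable {n k t : ℕ}

/-- The adaptive system on Gaussian coordinates induced by query maps on `vec (G + Gᵀ)`.
Histories are stored as full `t`-tuples of responses, zero in the rounds not yet played. -/
def sysOf (Q : QueryMaps (n * n) k t)
    (hQ : ∀ (j : Fin t) (i : Fin k) (l : Fin (n * n)), Measurable fun h => Q j h i l) :
    AdaptSys (Fin t → Fin k → ℝ) k (Fin n × Fin n) where
  q m h := if hm : m < t then Q ⟨m, hm⟩ (fun i => h ⟨i.1, i.isLt.trans hm⟩) * symLift n else 0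
  up m h a := if hm : m < t then Function.update h ⟨m, hm⟩ a else h
  h0 := 0
  hq m := by
    by_cases hm : m < t
    · simp only [hm, dif_pos]
      refine measurable_mat_iff.2 fun i p => ?_
      simp only [Matrix.mul_apply]
      refine Finset.measurable_sum _ fun l _ => Measurable.mul_const ?_ _
      exact (hQ ⟨m, hm⟩ i l).comp (measurable_pi_lambda _ fun i => measurable_pi_apply _)
    · simp only [hm, dif_neg, not_false_eq_true]
      exact measurable_const
  hup m := by
    by_cases hm : m < t
    · simp only [hm, dif_pos]
      refine measurable_pi_lambda _ fun j => ?_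
      by_cases hj : j = ⟨m, hm⟩
      · subst hj; simpa using measurable_snd
      · simp only [Function.update_of_ne hj]
        exact (measurable_pi_apply j).comp measurable_fst
    · simp only [hm, dif_neg, not_false_eq_true]
      exact measurable_fst

lemma sysOf_state (Q : QueryMaps (n * n) k t)
    (hQ : ∀ (j : Fin t) (i : Fin k) (l : Fin (n * n)), Measurable fun h => Q j h i l)
    (g : Fin n × Fin n → ℝ) (m : ℕ) (hm : m ≤ t) (j : Fin t) (hj : j.1 < m) :
    ((sysOf Q hQ).state m g).1 j = QueryMaps.resp Q (_root_.vec n (symMat g)) j := by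
  induction m generalizing j with
  | zero => omega
  | succ m ih =>
    have hmt : m < t := hm
    have e : ((sysOf Q hQ).state (m + 1) g).1 = Function.update ((sysOf Q hQ).state m g).1 ⟨m, hmt⟩
        ((Q ⟨m, hmt⟩ (fun i => ((sysOf Q hQ).state m g).1 ⟨i.1, i.isLt.trans hmt⟩) * symLift n) *ᵥ g) := by
      change (sysOf Q hQ).up m _ ((sysOf Q hQ).q m _ *ᵥ g) = _
      simp [sysOf, hmt]
    rw [e]
    by_cases hjm : j = ⟨m, hmt⟩
    · subst hjm
      rw [Function.update_self, ← mulVec_mulVec, symLift_mulVec, QueryMaps.resp]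
      congr 2
      funext i
      exact ih hmt.le _ i.isLt
    · rw [Function.update_of_ne hjm]
      exact ih hmt.le _ (by
        have : j.1 ≠ m := fun h => hjm (Fin.ext h)
        omega)

lemma resp_measurable {Ω : Type} [MeasurableSpace Ω] (Qf : Ω → QueryMaps (n * n) k t)
    (hQ : ∀ (j : Fin t) (i : Fin k) (l : Fin (n * n)),
      Measurable fun p : Ω × (Fin (j : ℕ) → Fin k → ℝ) => Qf p.1 j p.2 i l)
    (m : ℕ) (j : Fin t) (hj : j.1 < m) :
    Measurable fun p : Ω × (Fin (n * n) → ℝ) => QueryMaps.resp (Qf p.1) p.2 j := by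
  induction m generalizing j with
  | zero => omega
  | succ m ih =>
    have e : (fun p : Ω × (Fin (n * n) → ℝ) => QueryMaps.resp (Qf p.1) p.2 j) = fun p =>
        (Qf p.1 j fun i => QueryMaps.resp (Qf p.1) p.2 ⟨i.1, i.isLt.trans j.isLt⟩).mulVec p.2 := by
      funext p; rw [QueryMaps.resp]
    rw [e]
    refine measurable_mulVec (measurable_mat_iff.2 fun i l => ?_) measurable_snd
    refine (hQ j i l).comp (measurable_fst.prodMk (measurable_pi_lambda _ fun i' => ?_))
    exact ih _ (by have := i'.isLt; simp only; omega)

end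

/-! ### The averaged inequality and the conclusion -/

section

lemma close_measurableSet {n : ℕ} {X : Type*} [MeasurableSpace X] (α T : ℝ)
    (s : (Fin n → Bool) × (Fin n → Bool)) {f : X → Matrix (Fin n) (Fin n) ℝ}
    (hf : ∀ i j, Measurable fun x => f x i j) : MeasurableSet {x | Close α T s (f x)} := by
  have : {x | Close α T s (f x)} = ⋂ u : Fin n → Bool, ⋂ v : Fin n → Bool,
      {x | |signVec u ⬝ᵥ ((plantMat n α s - f x) *ᵥ signVec v)| ≤ T} := by
    ext x; simp [Close]
  rw [this]
  refine MeasurableSet.iInter fun u => MeasurableSet.iInter fun v => measurableSet_le ?_ measurable_const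
  have h : Measurable fun x => signVec u ⬝ᵥ ((plantMat n α s - f x) *ᵥ signVec v) := by
    simp only [dotProduct, mulVec, Matrix.sub_apply]
    refine Finset.measurable_sum _ fun i _ => Measurable.const_mul ?_ _
    refine Finset.measurable_sum _ fun j _ => Measurable.mul_const ?_ _
    exact (hf i j).const_sub _
  exact h.abs

/-- The Bayes-risk inequality: the success probability averaged over all plants, over the noise and
over the seed is at least `(99/100)(1 - e^{-n})`, while for each seed it is controlled by
`AdaptSys.sum_success_le` and the count of plants close to a fixed output. The plant has strength
`α = 720/√n`, and the energy captured grows at most by the factor `8294400 = 16 * 720 ^ 2` per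
round. -/
lemma master {n r k t : ℕ} (hn : 1 ≤ n) (hr : 2 ≤ r)
    {Ω : Type} [MeasurableSpace Ω] (μ : Measure Ω) [IsProbabilityMeasure μ]
    (Qf : Ω → QueryMaps (n * n) k t)
    (out : Ω → (Fin t → Fin k → ℝ) → Matrix (Fin n) (Fin n) ℝ)
    (hV : ∀ ω, (Qf ω).Valid)
    (hQ : ∀ (j : Fin t) (i : Fin k) (l : Fin (n * n)),
      Measurable fun p : Ω × (Fin (j : ℕ) → Fin k → ℝ) => Qf p.1 j p.2 i l)
    (hout : ∀ i j : Fin n, Measurable fun p : Ω × (Fin t → Fin k → ℝ) => out p.1 p.2 i j)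
    (hsucc : ∀ A : Matrix (Fin n) (Fin n) ℝ, A.IsSymm → (99 / 100 : ℝ≥0∞) ≤
      μ {ω | (out ω (QueryMaps.resp (Qf ω) (_root_.vec n A))).rank ≤ r ∧
        specNorm (A - out ω (QueryMaps.resp (Qf ω) (_root_.vec n A))) ≤ 2 * singVal A (r + 1)})
    (D : ℝ) (hD : D = t * k / n + 5) :
    99 / 100 * (1 - Real.exp (-n)) ≤
      (2 * t + 1) * Real.exp (-D) +
        4 * Real.exp (3 * D * (8294400 : ℝ) ^ t + D - n / 32) := by
  have hn' : (0 : ℝ) < n := by exact_mod_cast hn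
  have hs0 : 0 < √(n : ℝ) := Real.sqrt_pos.2 hn'
  have hsq : √(n : ℝ) ^ 2 = n := Real.sq_sqrt hn'.le
  obtain ⟨α, hα⟩ : ∃ α : ℝ, α = 720 / √n := ⟨_, rfl⟩
  obtain ⟨T, hT⟩ : ∃ T : ℝ, T = 180 * (n * √n) := ⟨_, rfl⟩
  have hα0 : 0 < α := by rw [hα]; positivity
  have hα2 : α ^ 2 = 720 ^ 2 / n := by rw [hα, div_pow, hsq]
  have hαT : 4 * T ≤ α * n ^ 2 := by
    apply le_of_eq
    rw [hT, hα]
    field_simp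
    rw [hsq]; ring
  set γ := gaussPi (Fin n × Fin n) with hγ
  let ans : Ω → (Fin n × Fin n → ℝ) → Matrix (Fin n) (Fin n) ℝ := fun ω x =>
    out ω (QueryMaps.resp (Qf ω) (_root_.vec n (symMat x)))
  have hresp : Measurable fun p : Ω × (Fin n × Fin n → ℝ) =>
      (QueryMaps.resp (Qf p.1) (_root_.vec n (symMat p.2)) : Fin t → Fin k → ℝ) := by
    refine measurable_pi_lambda _ fun j => ?_
    have h := resp_measurable Qf hQ t j j.isLt
    refine h.comp (measurable_fst.prodMk (g := fun p : Ω × (Fin n × Fin n → ℝ) =>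
      _root_.vec n (symMat p.2)) ?_)
    simp only [← symLift_mulVec]
    exact measurable_mulVec measurable_const measurable_snd
  have hans : ∀ i j, Measurable fun p : Ω × (Fin n × Fin n → ℝ) => ans p.1 p.2 i j := fun i j =>
    (hout i j).comp (measurable_fst.prodMk hresp)
  have hC : ∀ s, MeasurableSet {p : Ω × (Fin n × Fin n → ℝ) |
      Close α T s (ans p.1 (plantVec n α s + p.2))} := fun s =>
    close_measurableSet α T s fun i j =>
      (hans i j).comp (measurable_fst.prodMk (measurable_snd.const_add _))
  -- lower bound for a fixed plant
  have hlow : ∀ s, ENNReal.ofReal (99 / 100 * (1 - Real.exp (-n))) ≤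
      ∫⁻ ω, γ {g | Close α T s (ans ω (plantVec n α s + g))} ∂μ := by
    intro s
    have e1 := Measure.prod_apply (μ := μ) (ν := γ) (hC s)
    have e2 := Measure.prod_apply_symm (μ := μ) (ν := γ) (hC s)
    have e3 : ∫⁻ ω, γ {g | Close α T s (ans ω (plantVec n α s + g))} ∂μ =
        ∫⁻ g, μ {ω | Close α T s (ans ω (plantVec n α s + g))} ∂γ := e1.symm.trans e2
    rw [e3]
    have hgood : ENNReal.ofReal (1 - Real.exp (-n)) ≤ γ (goodSet n) := by
      have h1 : γ (goodSet n) = 1 - γ (goodSet n)ᶜ := by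
        rw [prob_compl_eq_one_sub (goodSet_measurable n), ENNReal.sub_sub_cancel (by simp) prob_le_one]
      rw [h1, ENNReal.ofReal_sub _ (Real.exp_pos _).le, ENNReal.ofReal_one]
      exact tsub_le_tsub_left (goodSet_compl_le hn) _
    have h99 : ENNReal.ofReal (99 / 100) = 99 / 100 := by
      rw [ENNReal.ofReal_div_of_pos (by norm_num)]; simp
    calc ENNReal.ofReal (99 / 100 * (1 - Real.exp (-n)))
        = 99 / 100 * ENNReal.ofReal (1 - Real.exp (-n)) := by
          rw [ENNReal.ofReal_mul (by norm_num), h99]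
      _ ≤ 99 / 100 * γ (goodSet n) := by gcongr
      _ = ∫⁻ _ in goodSet n, (99 / 100 : ℝ≥0∞) ∂γ := by rw [setLIntegral_const]
      _ ≤ ∫⁻ g in goodSet n, μ {ω | Close α T s (ans ω (plantVec n α s + g))} ∂γ := by
          refine setLIntegral_mono' (goodSet_measurable n) fun g hg => ?_
          refine (hsucc _ (symMat_isSymm (plantVec n α s + g))).trans (measure_mono ?_)
          rintro ω ⟨_, h⟩
          have := close_of_success hn hr α s hg _ h
          rw [← hT] at this
          exact this
      _ ≤ _ := setLIntegral_le_lintegral _ _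
  -- upper bound for a fixed seed
  have hup : ∀ ω, ∑ s, γ {g | Close α T s (ans ω (plantVec n α s + g))} ≤
      ENNReal.ofReal (4 ^ n * ((2 * t + 1) * Real.exp (-D)) +
        Real.exp (3 * D * (8294400 : ℝ) ^ t + D) * (4 ^ n * (4 * Real.exp (-(n / 32))))) := by
    intro ω
    have h := (sysOf (Qf ω) (hV ω).1).sum_success_le α (1 / (8 * 720 ^ 2)) 8294400 D t
      (by norm_num) (by rw [hα2]; field_simp; norm_num) (by norm_num) (by norm_num)
      (by rw [hD]; positivity)
      (by
        rw [hα2, hD]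
        have : (0 : ℝ) ≤ t * k / n := by positivity
        have e : 4 * (1 / (8 * 720 ^ 2) * (720 ^ 2 / (n : ℝ))) * (t * k) = (t * k / n) / 2 := by
          field_simp; ring
        rw [e]; linarith)
      (fun s => {h | Close α T s (out ω h)})
      (fun s => close_measurableSet α T s fun i j => (hout i j).comp measurable_prodMk_left)
      (4 ^ n * (4 * Real.exp (-(n / 32))))
      (fun h => by simpa using count_close α T hα0 hαT (out ω h))
    refine le_trans (le_of_eq ?_) h
    refine Finset.sum_congr rfl fun s _ => ?_
    congr 1
    ext g
    have e : ((sysOf (Qf ω) (hV ω).1).state t (plantVec n α s + g)).1 =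
        QueryMaps.resp (Qf ω) (_root_.vec n (symMat (plantVec n α s + g))) :=
      funext fun j => sysOf_state _ _ _ t le_rfl j j.isLt
    simp only [Set.mem_ofPred_eq, e]
    rfl
  have hmeas : ∀ s, Measurable fun ω => γ {g | Close α T s (ans ω (plantVec n α s + g))} :=
    fun s => measurable_measure_prodMk_left (hC s)
  have hfin := calc
    ENNReal.ofReal (4 ^ n * (99 / 100 * (1 - Real.exp (-n))))
        = ∑ _s : (Fin n → Bool) × (Fin n → Bool),
            ENNReal.ofReal (99 / 100 * (1 - Real.exp (-n))) := (AdaptSys.card_sum _).symm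
    _ ≤ ∑ s, ∫⁻ ω, γ {g | Close α T s (ans ω (plantVec n α s + g))} ∂μ :=
        Finset.sum_le_sum fun s _ => hlow s
    _ = ∫⁻ ω, ∑ s, γ {g | Close α T s (ans ω (plantVec n α s + g))} ∂μ :=
        (lintegral_finsetSum _ fun s _ => hmeas s).symm
    _ ≤ ∫⁻ _, ENNReal.ofReal (4 ^ n * ((2 * t + 1) * Real.exp (-D)) +
        Real.exp (3 * D * (8294400 : ℝ) ^ t + D) * (4 ^ n * (4 * Real.exp (-(n / 32))))) ∂μ :=
        lintegral_mono hup
    _ = ENNReal.ofReal (4 ^ n * ((2 * t + 1) * Real.exp (-D)) +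
        Real.exp (3 * D * (8294400 : ℝ) ^ t + D) * (4 ^ n * (4 * Real.exp (-(n / 32))))) := by
        simp
  rw [ENNReal.ofReal_le_ofReal_iff (by positivity)] at hfin
  have h4 : (0 : ℝ) < 4 ^ n := by positivity
  refine le_of_mul_le_mul_left (hfin.trans (le_of_eq ?_)) h4
  rw [sub_eq_add_neg _ ((n : ℝ) / 32), Real.exp_add _ (-((n : ℝ) / 32))]
  ring

/-- Numerical contradiction: few rounds make the right-hand side of `master` smaller than its
left-hand side. -/
lemma numerics {n k t : ℕ} (hn : 1280 ≤ n) (hk : 2 * n ≤ k)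
    (ht : 100 * (t : ℝ) ≤ Real.log ((n : ℝ) ^ 2 / k)) (D : ℝ) (hD : D = t * k / n + 5) :
    (2 * t + 1) * Real.exp (-D) + 4 * Real.exp (3 * D * (8294400 : ℝ) ^ t + D - n / 32) <
      99 / 100 * (1 - Real.exp (-n)) := by
  have hn1 : (1280 : ℝ) ≤ n := by exact_mod_cast hn
  have hn' : (0 : ℝ) < n := by linarith
  have hk1 : 2 * (n : ℝ) ≤ k := by exact_mod_cast hk
  have hk' : (0 : ℝ) < k := by linarith
  have ht0 : (0 : ℝ) ≤ t := by positivity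
  have hD1 : 2 * (t : ℝ) + 5 ≤ D := by
    have : 2 * (t : ℝ) ≤ t * k / n := by
      rw [le_div_iff₀ hn']; nlinarith
    linarith
  have hexp5 : Real.exp (-5) ≤ 1 / 6 := by
    rw [Real.exp_neg, one_div]
    apply inv_anti₀ (by norm_num)
    linarith [Real.add_one_le_exp (5 : ℝ)]
  have h1 : (2 * t + 1) * Real.exp (-D) ≤ 1 / 6 := by
    have a : (2 * t + 1) ≤ Real.exp (2 * t) := Real.add_one_le_exp _
    calc (2 * t + 1) * Real.exp (-D) ≤ Real.exp (2 * t) * Real.exp (-D) := by gcongr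
      _ = Real.exp (2 * t - D) := by rw [← Real.exp_add]; rfl
      _ ≤ Real.exp (-5) := Real.exp_le_exp.2 (by linarith)
      _ ≤ _ := hexp5
  have hDR : 4 * D * (8294400 : ℝ) ^ t ≤ n / 64 := by
    rcases Nat.eq_zero_or_pos t with rfl | htp
    · simp at hD
      rw [hD]; simp; linarith
    · have ht1 : (1 : ℝ) ≤ t := by exact_mod_cast htp
      have hy : 0 < (n : ℝ) ^ 2 / k := by positivity
      have hDle : D ≤ 6 * (t * k / n) := by
        have : 1 ≤ t * k / (n : ℝ) := by rw [le_div_iff₀ hn']; nlinarith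
        linarith
      have hkey : 1536 * t * (8294400 : ℝ) ^ t ≤ (n : ℝ) ^ 2 / k := by
        have e2 : (2 : ℝ) ≤ Real.exp 1 := by linarith [Real.add_one_le_exp (1 : ℝ)]
        have a1 : (1536 : ℝ) ≤ Real.exp 11 := by
          have : Real.exp 11 = Real.exp 1 ^ 11 := by rw [← Real.exp_nat_mul]; norm_num
          rw [this]
          calc (1536 : ℝ) ≤ 2 ^ 11 := by norm_num
            _ ≤ _ := by gcongr
        have a2 : (t : ℝ) ≤ Real.exp t := by linarith [Real.add_one_le_exp (t : ℝ)]
        have a3 : (8294400 : ℝ) ≤ Real.exp 23 := by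
          have : Real.exp 23 = Real.exp 1 ^ 23 := by rw [← Real.exp_nat_mul]; norm_num
          rw [this]
          calc (8294400 : ℝ) ≤ 2 ^ 23 := by norm_num
            _ ≤ _ := by gcongr
        calc 1536 * t * (8294400 : ℝ) ^ t ≤ Real.exp 11 * Real.exp t * Real.exp 23 ^ t := by gcongr
          _ = Real.exp (11 + t + t * 23) := by rw [← Real.exp_nat_mul, ← Real.exp_add, ← Real.exp_add]
          _ ≤ Real.exp (Real.log ((n : ℝ) ^ 2 / k)) := Real.exp_le_exp.2 (by linarith)
          _ = _ := Real.exp_log hy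
      have hR0 : (0 : ℝ) < 8294400 ^ t := by positivity
      calc 4 * D * (8294400 : ℝ) ^ t ≤ 4 * (6 * (t * k / n)) * (8294400 : ℝ) ^ t := by gcongr
        _ = (1536 * t * (8294400 : ℝ) ^ t) * (k / (64 * n)) := by field_simp; norm_num
        _ ≤ ((n : ℝ) ^ 2 / k) * (k / (64 * n)) := by gcongr
        _ = n / 64 := by field_simp
  have hR1 : (1 : ℝ) ≤ 8294400 ^ t := one_le_pow₀ (by norm_num)
  have hexp20 : Real.exp (-20) ≤ 1 / 21 := by
    rw [Real.exp_neg, one_div]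
    apply inv_anti₀ (by norm_num)
    linarith [Real.add_one_le_exp (20 : ℝ)]
  have h2 : Real.exp (3 * D * (8294400 : ℝ) ^ t + D - n / 32) ≤ 1 / 21 := by
    refine le_trans (Real.exp_le_exp.2 ?_) hexp20
    have : D ≤ D * 8294400 ^ t := le_mul_of_one_le_right (by linarith) hR1
    linarith
  have h3 : Real.exp (-n) ≤ 1 / 6 := le_trans (Real.exp_le_exp.2 (by linarith)) hexp5
  linarith

end

/-- Round lower bound for 2-approximate spectral norm low-rank approximation of
symmetric matrices, for rank `r ≥ 2`. -/
theorem symmetric_spectral_LRA_round_lower_bound :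
    ∃ (c : ℝ) (n₀ : ℕ), 0 < c ∧
      ∀ (n r k t : ℕ), n₀ ≤ n → 2 ≤ r → n * r ≤ k → k ≤ n ^ 2 →
      ∀ (Ω : Type) [MeasurableSpace Ω] (μ : Measure Ω) [IsProbabilityMeasure μ]
        (Qf : Ω → QueryMaps (n * n) k t)
        (out : Ω → (Fin t → Fin k → ℝ) → Matrix (Fin n) (Fin n) ℝ),
        (∀ ω, (Qf ω).Valid) →
        (∀ (j : Fin t) (i : Fin k) (l : Fin (n * n)),
            Measurable fun p : Ω × (Fin (j : ℕ) → Fin k → ℝ) => Qf p.1 j p.2 i l) →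
        (∀ i j : Fin n,
            Measurable fun p : Ω × (Fin t → Fin k → ℝ) => out p.1 p.2 i j) →
        (∀ A : Matrix (Fin n) (Fin n) ℝ, A.IsSymm →
            (99 / 100 : ℝ≥0∞) ≤
              μ {ω | (out ω (QueryMaps.resp (Qf ω) (vec n A))).rank ≤ r ∧
                    specNorm (A - out ω (QueryMaps.resp (Qf ω) (vec n A)))
                      ≤ 2 * singVal A (r + 1)}) →
        c * (Real.log ((n : ℝ) ^ 2 / k) / Real.log (Real.log n)) ≤ (t : ℝ) := by
  obtain ⟨N, hN⟩ := exists_nat_ge (Real.exp (Real.exp 1))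
  refine ⟨1 / 100, max 1280 N, by norm_num, ?_⟩
  intro n r k t hn hr hk hk2 Ω _ μ _ Qf out hV hQ hout hsucc
  have hn1 : 1280 ≤ n := (le_max_left _ _).trans hn
  have hnN : Real.exp (Real.exp 1) ≤ n := hN.trans (by exact_mod_cast (le_max_right _ _).trans hn)
  have hll : 1 ≤ Real.log (Real.log n) := by
    have h1 : Real.exp 1 ≤ Real.log n := by
      rwa [Real.le_log_iff_exp_le (by positivity)]
    rwa [Real.le_log_iff_exp_le (lt_of_lt_of_le (Real.exp_pos 1) h1)]
  have hk' : 2 * n ≤ k := by nlinarith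
  have hkpos : (0 : ℝ) < k := by
    have : 0 < k := by omega
    exact_mod_cast this
  have hlog : 0 ≤ Real.log ((n : ℝ) ^ 2 / k) := by
    apply Real.log_nonneg
    rw [one_le_div hkpos]
    exact_mod_cast hk2
  by_contra! hlt
  have hdiv : Real.log ((n : ℝ) ^ 2 / k) / Real.log (Real.log n) ≤ Real.log ((n : ℝ) ^ 2 / k) :=
    div_le_self hlog hll
  have h1 := master (by omega) hr μ Qf out hV hQ hout hsucc _ rfl
  have h2 := numerics (t := t) hn1 hk' (by linarith) _ rfl
  linarith

end
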